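/- arXiv:2310.02134 — 12 statements merged into one kernel-verified Lean document; each statement's English description precedes it below -/
import Mathlib

section
/- Let h ∈ (0,1) and α ∈ (0,2). Let v̲, v̄ : [0,1] × ℝ^d → ℝ be bounded continuous functions and let h₁, h₂ : [h,1] × ℝ^d → ℝ be bounded continuous functions. Assume that for every (t,x) ∈ [h,1] × ℝ^d one has v̲(t,x) − sup_{k∈Λ} ∫_{ℝ^d} v̲(t−h, x + h^{1/α} z) dμ_k(z) ≤ h · h₁(t,x) and v̄(t,x) − sup_{k∈Λ} ∫_{ℝ^d} v̄(t−h, x + h^{1/α} z) dμ_k(z) ≥ h · h₂(t,x). Then for every (t,x) ∈ [0,1] × ℝ^d, v̲(t,x) − v̄(t,x) ≤ sup_{(s,y) ∈ [0,h) × ℝ^d} max(v̲(s,y) − v̄(s,y), 0) + t · sup_{(s,y) ∈ [h,1] × ℝ^d} max(h₁(s,y) − h₂(s,y), 0). -/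
open MeasureTheory Set

/-- Comparison principle for the discrete approximation scheme (Lemma 3.4 /
`comparison` in the paper). -/
theorem stmt_0 {d : ℕ} (hd : 1 ≤ d) {Λ : Type*} [Nonempty Λ]
    (μ : Λ → Measure (EuclideanSpace ℝ (Fin d)))
    (hμ : ∀ k, IsProbabilityMeasure (μ k))
    (h α : ℝ) (hh : h ∈ Set.Ioo (0:ℝ) 1) (hα : α ∈ Set.Ioo (0:ℝ) 2)
    (v₁ v₂ h₁ h₂ : ℝ → EuclideanSpace ℝ (Fin d) → ℝ)
    (hv₁c : ContinuousOn (fun q : ℝ × EuclideanSpace ℝ (Fin d) => v₁ q.1 q.2)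
      (Set.Icc 0 1 ×ˢ Set.univ))
    (hv₂c : ContinuousOn (fun q : ℝ × EuclideanSpace ℝ (Fin d) => v₂ q.1 q.2)
      (Set.Icc 0 1 ×ˢ Set.univ))
    (hv₁b : ∃ M, ∀ t ∈ Set.Icc (0:ℝ) 1, ∀ x, |v₁ t x| ≤ M)
    (hv₂b : ∃ M, ∀ t ∈ Set.Icc (0:ℝ) 1, ∀ x, |v₂ t x| ≤ M)
    (hh₁c : ContinuousOn (fun q : ℝ × EuclideanSpace ℝ (Fin d) => h₁ q.1 q.2)
      (Set.Icc h 1 ×ˢ Set.univ))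
    (hh₂c : ContinuousOn (fun q : ℝ × EuclideanSpace ℝ (Fin d) => h₂ q.1 q.2)
      (Set.Icc h 1 ×ˢ Set.univ))
    (hh₁b : ∃ M, ∀ t ∈ Set.Icc h 1, ∀ x, |h₁ t x| ≤ M)
    (hh₂b : ∃ M, ∀ t ∈ Set.Icc h 1, ∀ x, |h₂ t x| ≤ M)
    (hyp₁ : ∀ t ∈ Set.Icc h 1, ∀ x,
      v₁ t x - (⨆ k, ∫ z, v₁ (t - h) (x + h ^ (1/α) • z) ∂(μ k)) ≤ h * h₁ t x)
    (hyp₂ : ∀ t ∈ Set.Icc h 1, ∀ x,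
      h * h₂ t x ≤ v₂ t x - ⨆ k, ∫ z, v₂ (t - h) (x + h ^ (1/α) • z) ∂(μ k)) :
    ∀ t ∈ Set.Icc (0:ℝ) 1, ∀ x,
      v₁ t x - v₂ t x ≤
        (⨆ q : {q : ℝ × EuclideanSpace ℝ (Fin d) // 0 ≤ q.1 ∧ q.1 < h},
          max (v₁ q.1.1 q.1.2 - v₂ q.1.1 q.1.2) 0) +
        t * ⨆ q : {q : ℝ × EuclideanSpace ℝ (Fin d) // h ≤ q.1 ∧ q.1 ≤ 1},
          max (h₁ q.1.1 q.1.2 - h₂ q.1.1 q.1.2) 0 := by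
  obtain ⟨M₁, hM₁⟩ := hv₁b
  obtain ⟨M₂, hM₂⟩ := hv₂b
  obtain ⟨N₁, hN₁⟩ := hh₁b
  obtain ⟨N₂, hN₂⟩ := hh₂b
  obtain ⟨hh0, hh1⟩ := hh
  set A := (⨆ q : {q : ℝ × EuclideanSpace ℝ (Fin d) // 0 ≤ q.1 ∧ q.1 < h},
          max (v₁ q.1.1 q.1.2 - v₂ q.1.1 q.1.2) 0) with hA
  set B := ⨆ q : {q : ℝ × EuclideanSpace ℝ (Fin d) // h ≤ q.1 ∧ q.1 ≤ 1},
          max (h₁ q.1.1 q.1.2 - h₂ q.1.1 q.1.2) 0 with hB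
  have hAle : ∀ t x, 0 ≤ t → t < h → v₁ t x - v₂ t x ≤ A := by
    intro t x h0 h1
    refine le_trans (le_max_left _ 0) (le_ciSup (f := fun q : {q : ℝ × EuclideanSpace ℝ (Fin d) // 0 ≤ q.1 ∧ q.1 < h} =>
          max (v₁ q.1.1 q.1.2 - v₂ q.1.1 q.1.2) 0) ?_ ⟨(t, x), h0, h1⟩)
    refine ⟨max (M₁ + M₂) 0, ?_⟩
    rintro _ ⟨⟨⟨s, y⟩, hs0, hs1⟩, rfl⟩
    have hs : s ∈ Set.Icc (0:ℝ) 1 := ⟨hs0, (hs1.trans hh1).le⟩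
    have a := abs_le.1 (hM₁ s hs y)
    have b := abs_le.1 (hM₂ s hs y)
    exact max_le_max (by simp only; linarith) le_rfl
  have hBle : ∀ t x, h ≤ t → t ≤ 1 → h₁ t x - h₂ t x ≤ B := by
    intro t x h0 h1
    refine le_trans (le_max_left _ 0) (le_ciSup (f := fun q : {q : ℝ × EuclideanSpace ℝ (Fin d) // h ≤ q.1 ∧ q.1 ≤ 1} =>
          max (h₁ q.1.1 q.1.2 - h₂ q.1.1 q.1.2) 0) ?_ ⟨(t, x), h0, h1⟩)
    refine ⟨max (N₁ + N₂) 0, ?_⟩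
    rintro _ ⟨⟨⟨s, y⟩, hs0, hs1⟩, rfl⟩
    have hs : s ∈ Set.Icc h 1 := ⟨hs0, hs1⟩
    have a := abs_le.1 (hN₁ s hs y)
    have b := abs_le.1 (hN₂ s hs y)
    exact max_le_max (by simp only; linarith) le_rfl
  have hB0 : 0 ≤ B := Real.iSup_nonneg fun q => le_max_right _ _
  have hint : ∀ v : ℝ → EuclideanSpace ℝ (Fin d) → ℝ,
      ContinuousOn (fun q : ℝ × EuclideanSpace ℝ (Fin d) => v q.1 q.2)
        (Set.Icc 0 1 ×ˢ Set.univ) → ∀ M, (∀ t ∈ Set.Icc (0:ℝ) 1, ∀ x, |v t x| ≤ M) →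
      ∀ s ∈ Set.Icc (0:ℝ) 1, ∀ x k,
        Integrable (fun z => v s (x + h ^ (1/α) • z)) (μ k) := by
    intro v hv M hM s hs x k
    have hc : Continuous (fun z => v s (x + h ^ (1/α) • z)) :=
      hv.comp_continuous (f := fun z : EuclideanSpace ℝ (Fin d) => (s, x + h ^ (1/α) • z))
        (by fun_prop) (fun z => ⟨hs, Set.mem_univ _⟩)
    have := hμ k
    exact Integrable.of_bound hc.aestronglyMeasurable M
      (Filter.Eventually.of_forall fun z => hM s hs _)
  have key : ∀ n : ℕ, ∀ t ∈ Set.Icc (0:ℝ) 1, t < (n + 1) * h → ∀ x,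
      v₁ t x - v₂ t x ≤ A + t * B := by
    intro n
    induction n with
    | zero =>
      intro t ht hlt x
      have := hAle t x ht.1 (by simpa using hlt)
      have := mul_nonneg ht.1 hB0
      linarith
    | succ n ih =>
      intro t ht hlt x
      rcases lt_or_ge t h with hth | hth
      · have := hAle t x ht.1 hth
        have := mul_nonneg ht.1 hB0
        linarith
      have hs : t - h ∈ Set.Icc (0:ℝ) 1 := ⟨by linarith, by linarith [ht.2]⟩
      have ih' := ih (t - h) hs (by push_cast at hlt; linarith)
      have e1 := hyp₁ t ⟨hth, ht.2⟩ x
      have e2 := hyp₂ t ⟨hth, ht.2⟩ x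
      have e3 := mul_le_mul_of_nonneg_left (hBle t x hth ht.2) hh0.le
      have hbdd : BddAbove (Set.range fun k => ∫ z, v₂ (t - h) (x + h ^ (1/α) • z) ∂(μ k)) := by
        refine ⟨M₂, ?_⟩
        rintro _ ⟨k, rfl⟩
        have := hμ k
        have := integral_mono (hint v₂ hv₂c M₂ hM₂ _ hs x k) (integrable_const M₂)
          (fun z => (abs_le.1 (hM₂ _ hs _)).2)
        simpa using this
      have e4 : (⨆ k, ∫ z, v₁ (t - h) (x + h ^ (1/α) • z) ∂(μ k)) ≤
          (⨆ k, ∫ z, v₂ (t - h) (x + h ^ (1/α) • z) ∂(μ k)) + (A + (t - h) * B) := by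
        refine ciSup_le fun k => ?_
        have := hμ k
        have i2 := hint v₂ hv₂c M₂ hM₂ _ hs x k
        have c1 := integral_mono (hint v₁ hv₁c M₁ hM₁ _ hs x k)
          (i2.add (integrable_const (A + (t - h) * B)))
          (fun z => by
            have := ih' (x + h ^ (1/α) • z)
            simp only [Pi.add_apply]
            linarith)
        rw [integral_add' i2 (integrable_const _)] at c1
        simp only [integral_const, probReal_univ, one_smul] at c1
        have := le_ciSup hbdd k
        linarith
      linarith
  intro t ht x
  obtain ⟨n, hn⟩ := exists_nat_gt (t / h)
  rw [div_lt_iff₀ hh0] at hn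
  exact key n t ht (by linarith) x
end

section
/- Let δ ∈ (0,1] with δ < α if α ≤ 1 (for α ∈ (1,2) one may take δ = 1). For a bounded continuous f : ℝ^d → ℝ define T₁f(x) := sup_{k∈Λ} ∫_{ℝ^d} f(x+z) dμ_k(z), and let T₁ⁿ denote its n-fold iterate. Assume there is a constant M_δ ≥ 0 such that for every integer n ≥ 1 and every R > 0, T₁ⁿ[y ↦ min(|y|^δ, R)](0) ≤ M_δ n^{δ/α}. Then for all t, s ∈ [0,1] and every x ∈ ℝ^d, the solution u_h of the discrete approximation scheme satisfies |u_h(t,x) − u_h(s,x)| ≤ C_φ^δ (2‖φ‖_∞)^{1−δ} M_δ (|t−s|^{δ/α} + h^{δ/α}). -/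
open MeasureTheory Set

noncomputable def SOp {E Λ : Type*} [NormedAddCommGroup E] [NormedSpace ℝ E] [MeasurableSpace E]
    (μ : Λ → Measure E) (c : ℝ) (f : E → ℝ) (x : E) : ℝ := ⨆ k, ∫ z, f (x + c • z) ∂(μ k)

def Good {E : Type*} [NormedAddCommGroup E] (f : E → ℝ) : Prop :=
  (∃ B, ∀ x, |f x| ≤ B) ∧ UniformContinuous f

set_option linter.unusedSectionVars false
section
variable {E Λ : Type*} [NormedAddCommGroup E] [NormedSpace ℝ E] [MeasurableSpace E]
  [BorelSpace E] [SecondCountableTopology E] [Nonempty Λ]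
  (μ : Λ → Measure E) (hμ : ∀ k, IsProbabilityMeasure (μ k))

include hμ in
theorem Good.integrable {f : E → ℝ} (hf : Good f) (c : ℝ) (x : E) (k : Λ) :
    Integrable (fun z => f (x + c • z)) (μ k) := by
  have := hμ k
  obtain ⟨⟨B, hB⟩, hc⟩ := hf
  have hc := hc.continuous
  refine Integrable.of_bound (C := B) ?_ (ae_of_all _ fun z => by simpa using hB _)
  exact (by fun_prop : Continuous fun z => f (x + c • z)).aestronglyMeasurable

include hμ in
theorem Good.int_le {f : E → ℝ} {B : ℝ} (hB : ∀ x, |f x| ≤ B) (c : ℝ) (x : E) (k : Λ) :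
    |∫ z, f (x + c • z) ∂(μ k)| ≤ B := by
  have := hμ k
  have := norm_integral_le_of_norm_le_const (μ := μ k) (f := fun z => f (x + c • z)) (C := B)
    (ae_of_all _ fun z => by simpa using hB _)
  simpa using this

include hμ in
theorem Good.bdd {f : E → ℝ} (hf : Good f) (c : ℝ) (x : E) :
    BddAbove (range fun k => ∫ z, f (x + c • z) ∂(μ k)) := by
  obtain ⟨⟨B, hB⟩, hc⟩ := hf
  refine ⟨B, ?_⟩
  rintro _ ⟨k, rfl⟩
  exact (abs_le.1 (Good.int_le μ hμ hB c x k)).2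

include hμ in
theorem SOp_le {f g : E → ℝ} (hf : Good f) (hg : Good g) {c c' a e : ℝ} {x x' : E} (ha : 0 ≤ a)
    (H : ∀ z, f (x + c • z) ≤ a * g (x' + c' • z) + e) :
    SOp μ c f x ≤ a * SOp μ c' g x' + e := by
  refine ciSup_le fun k => ?_
  have := hμ k
  have h1 : ∫ z, f (x + c • z) ∂(μ k) ≤ ∫ z, (a * g (x' + c' • z) + e) ∂(μ k) :=
    integral_mono (hf.integrable μ hμ c x k)
      (((hg.integrable μ hμ c' x' k).const_mul a).add (integrable_const e)) H
  rw [integral_add ((hg.integrable μ hμ c' x' k).const_mul a) (integrable_const e),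
    integral_const_mul] at h1
  have h2 := mul_le_mul_of_nonneg_left (le_ciSup (hg.bdd μ hμ c' x') k) ha
  simp only [integral_const, probReal_univ, one_smul] at h1
  unfold SOp
  linarith

include hμ in
theorem le_SOp {f g : E → ℝ} (hf : Good f) (hg : Good g) {c c' a e : ℝ} {x x' : E} (ha : 0 ≤ a)
    (H : ∀ z, e ≤ a * g (x' + c' • z) + f (x + c • z)) :
    e ≤ a * SOp μ c' g x' + SOp μ c f x := by
  obtain ⟨k⟩ := ‹Nonempty Λ›
  have := hμ k
  have h1 : ∫ z, e ∂(μ k) ≤ ∫ z, (a * g (x' + c' • z) + f (x + c • z)) ∂(μ k) :=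
    integral_mono (integrable_const e)
      (((hg.integrable μ hμ c' x' k).const_mul a).add (hf.integrable μ hμ c x k)) H
  rw [integral_add ((hg.integrable μ hμ c' x' k).const_mul a) (hf.integrable μ hμ c x k),
    integral_const_mul] at h1
  have h2 := mul_le_mul_of_nonneg_left (le_ciSup (hg.bdd μ hμ c' x') k) ha
  have h3 := le_ciSup (hf.bdd μ hμ c x) k
  simp only [integral_const, probReal_univ, one_smul] at h1
  unfold SOp
  linarith

include hμ in
theorem Good.sop {f : E → ℝ} (hf : Good f) (c : ℝ) : Good (SOp μ c f) := by
  have hf' := hf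
  obtain ⟨⟨B, hB⟩, hc⟩ := hf
  refine ⟨⟨B, fun x => abs_le.2 ⟨?_, ?_⟩⟩, ?_⟩
  · obtain ⟨k⟩ := ‹Nonempty Λ›
    exact (abs_le.1 (Good.int_le μ hμ hB c x k)).1.trans (le_ciSup (hf'.bdd μ hμ c x) k)
  · exact ciSup_le fun k => (abs_le.1 (Good.int_le μ hμ hB c x k)).2
  · rw [Metric.uniformContinuous_iff] at hc ⊢
    intro ε hε
    obtain ⟨r, hr, H⟩ := hc (ε / 2) (by linarith)
    refine ⟨r, hr, fun {x y} hxy => ?_⟩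
    have key : ∀ {x y : E}, dist x y < r → SOp μ c f x ≤ 1 * SOp μ c f y + ε / 2 := by
      intro x y hxy
      refine SOp_le μ hμ hf' hf' zero_le_one fun z => ?_
      have := H (a := x + c • z) (b := y + c • z) (by simpa using hxy)
      rw [Real.dist_eq] at this
      linarith [(abs_lt.1 this).2]
    have h1 := key hxy
    have h2 := key (x := y) (y := x) (by rwa [dist_comm])
    rw [Real.dist_eq, abs_lt]
    constructor <;> linarith

include hμ in
theorem Good.iter {f : E → ℝ} (hf : Good f) (c : ℝ) (n : ℕ) : Good ((SOp μ c)^[n] f) := by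
  induction n with
  | zero => exact hf
  | succ n ih => rw [Function.iterate_succ_apply']; exact ih.sop μ hμ c

include hμ in
theorem iter_contr {f g : E → ℝ} (hf : Good f) (hg : Good g) (c e : ℝ)
    (H : ∀ x, f x ≤ g x + e) (n : ℕ) (x : E) :
    (SOp μ c)^[n] f x ≤ (SOp μ c)^[n] g x + e := by
  induction n generalizing x with
  | zero => exact H x
  | succ n ih =>
    rw [Function.iterate_succ_apply', Function.iterate_succ_apply']
    have := SOp_le μ hμ (hf.iter μ hμ c n) (hg.iter μ hμ c n) (c := c) (c' := c) (a := 1) (e := e)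
      (x := x) (x' := x) zero_le_one (fun z => by rw [one_mul]; exact ih _)
    rwa [one_mul] at this

include hμ in
theorem iter_cmp {f g : E → ℝ} (hf : Good f) (hg : Good g) (c K e : ℝ) (x : E) (hK : 0 ≤ K)
    (H : ∀ y, |f (x + c • y) - e| ≤ K * g y) (n : ℕ) (y : E) :
    |(SOp μ c)^[n] f (x + c • y) - e| ≤ K * (SOp μ 1)^[n] g y := by
  induction n generalizing y with
  | zero => exact H y
  | succ n ih =>
    rw [Function.iterate_succ_apply', Function.iterate_succ_apply']
    have ih' : ∀ z, |(SOp μ c)^[n] f (x + c • y + c • z) - e| ≤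
        K * (SOp μ 1)^[n] g (y + (1:ℝ) • z) := fun z => by
      have := ih (y + (1:ℝ) • z)
      rwa [smul_add, one_smul, ← add_assoc, ← one_smul ℝ z, smul_smul, mul_one] at this
    have h1 := SOp_le μ hμ (hf.iter μ hμ c n) (hg.iter μ hμ 1 n) (c := c) (c' := 1) (a := K) (e := e)
      (x := x + c • y) (x' := y) hK (fun z => by linarith [(abs_le.1 (ih' z)).2])
    have h2 := le_SOp μ hμ (hf.iter μ hμ c n) (hg.iter μ hμ 1 n) (c := c) (c' := 1) (a := K) (e := e)
      (x := x + c • y) (x' := y) hK (fun z => by linarith [(abs_le.1 (ih' z)).1])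
    rw [abs_le]; constructor <;> linarith

theorem good_min (δ R : ℝ) (h0 : 0 < δ) (h1 : δ ≤ 1) (hR : 0 < R) :
    Good (fun y : E => min (‖y‖ ^ δ) R) := by
  refine ⟨⟨R, fun x => ?_⟩, ?_⟩
  · rw [abs_of_nonneg (by positivity)]; exact min_le_right _ _
  · rw [Metric.uniformContinuous_iff]
    intro ε hε
    refine ⟨ε ^ (1 / δ), by positivity, fun {x y} hxy => ?_⟩
    have key : ∀ x y : E, ‖x‖ ^ δ ≤ ‖y‖ ^ δ + dist x y ^ δ := fun x y => by
      refine le_trans (Real.rpow_le_rpow (norm_nonneg _) ?_ h0.le)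
        (Real.rpow_add_le_add_rpow (norm_nonneg _) dist_nonneg h0.le h1)
      rw [dist_eq_norm]
      simpa using norm_add_le y (x - y)
    have h3 : dist x y ^ δ < ε := by
      have := Real.rpow_lt_rpow dist_nonneg hxy h0
      rwa [← Real.rpow_mul hε.le, one_div_mul_cancel h0.ne', Real.rpow_one] at this
    have k1 := key x y
    have k2 := key y x
    rw [dist_comm] at k2
    rw [Real.dist_eq]
    refine lt_of_le_of_lt (abs_min_sub_min_le_max _ _ _ _) ?_
    simp only [sub_self, abs_zero]
    refine max_lt ?_ hε
    rw [abs_lt]; constructor <;> linarith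
end

/-- Time regularity of the discrete approximation scheme. -/
theorem stmt_2 {d : ℕ} (hd : 1 ≤ d) {Λ : Type*} [Nonempty Λ]
    (μ : Λ → Measure (EuclideanSpace ℝ (Fin d)))
    (hμ : ∀ k, IsProbabilityMeasure (μ k))
    (h α : ℝ) (hh : h ∈ Set.Ioo (0:ℝ) 1) (hα : α ∈ Set.Ioo (0:ℝ) 2)
    (φ : EuclideanSpace ℝ (Fin d) → ℝ) (Mφ Cφ : ℝ)
    (hφb : ∀ x, |φ x| ≤ Mφ)
    (hφlip : ∀ x y, |φ x - φ y| ≤ Cφ * ‖x - y‖)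
    (δ Mδ : ℝ) (hδ0 : 0 < δ) (hδ1 : δ ≤ 1) (hδα : α ≤ 1 → δ < α) (hMδ : 0 ≤ Mδ)
    (hmom : ∀ n : ℕ, 1 ≤ n → ∀ R : ℝ, 0 < R →
      (fun f : EuclideanSpace ℝ (Fin d) → ℝ =>
        fun x => ⨆ k, ∫ z, f (x + z) ∂(μ k))^[n]
        (fun y => min (‖y‖ ^ δ) R) 0 ≤ Mδ * (n : ℝ) ^ (δ / α))
    (u : ℝ → EuclideanSpace ℝ (Fin d) → ℝ)
    (hu0 : ∀ t, 0 ≤ t → t < h → ∀ x, u t x = φ x)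
    (hurec : ∀ t, h ≤ t → ∀ x,
      u t x = ⨆ k, ∫ z, u (t - h) (x + h ^ (1/α) • z) ∂(μ k)) :
    ∀ t ∈ Set.Icc (0:ℝ) 1, ∀ s ∈ Set.Icc (0:ℝ) 1, ∀ x,
      |u t x - u s x| ≤
        Cφ ^ δ * (2 * Mφ) ^ (1 - δ) * Mδ * (|t - s| ^ (δ / α) + h ^ (δ / α)) := by
  obtain ⟨hh0, hh1⟩ := hh
  obtain ⟨hα0, hα2⟩ := hα
  have hM0 : 0 ≤ Mφ := (abs_nonneg _).trans (hφb 0)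
  have hC0 : 0 ≤ Cφ := by
    have := hφlip (EuclideanSpace.single ⟨0, hd⟩ 1) 0
    have h2 := (abs_nonneg _).trans this
    simpa using h2
  have hφg : Good φ := by
    refine ⟨⟨Mφ, hφb⟩, ?_⟩
    refine (LipschitzWith.of_dist_le_mul (K := ⟨Cφ, hC0⟩) fun x y => ?_).uniformContinuous
    rw [Real.dist_eq, dist_eq_norm]; exact hφlip x y
  have hda : δ / α ≤ 1 := by
    rw [div_le_one hα0]
    rcases le_or_gt α 1 with h1 | h1
    · exact (hδα h1).le
    · linarith
  have hda0 : 0 < δ / α := by positivity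
  have hT : (fun f : EuclideanSpace ℝ (Fin d) → ℝ =>
        fun x => ⨆ k, ∫ z, f (x + z) ∂(μ k)) = SOp μ 1 := by
    funext f x; simp [SOp]
  rw [hT] at hmom
  set c : ℝ := h ^ (1 / α) with hc
  have hc0 : 0 < c := by positivity
  have hcδ : c ^ δ = h ^ (δ / α) := by
    rw [hc, ← Real.rpow_mul hh0.le]; congr 1; ring
  set K : ℝ := Cφ ^ δ * (2 * Mφ) ^ (1 - δ) with hK
  have hK0 : 0 ≤ K := by positivity
  -- single-level estimate
  have est : ∀ j : ℕ, ∀ x, |(SOp μ c)^[j] φ x - φ x| ≤ K * Mδ * ((j : ℝ) * h) ^ (δ / α) := by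
    intro j x
    rcases Nat.eq_zero_or_pos j with rfl | hj
    · simp only [Function.iterate_zero, id, sub_self, abs_zero]; positivity
    have hKc : 0 ≤ K * c ^ δ := by positivity
    have hR : 0 < 2 * Mφ / (K * c ^ δ) + 1 := by positivity
    have hb : ∀ y, |φ (x + c • y) - φ x| ≤
        (K * c ^ δ) * min (‖y‖ ^ δ) (2 * Mφ / (K * c ^ δ) + 1) := by
      intro y
      have b1 := hφlip (x + c • y) x
      rw [add_sub_cancel_left, norm_smul, Real.norm_of_nonneg hc0.le] at b1
      have b2 : |φ (x + c • y) - φ x| ≤ 2 * Mφ := by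
        have := abs_sub (φ (x + c • y)) (φ x)
        linarith [hφb (x + c • y), hφb x]
      set a := |φ (x + c • y) - φ x|
      have ha : 0 ≤ a := abs_nonneg _
      have b3 : a ≤ K * c ^ δ * ‖y‖ ^ δ := by
        calc a = a ^ δ * a ^ (1 - δ) := by
              rw [← Real.rpow_add' ha (by simp)]; simp
          _ ≤ (Cφ * (c * ‖y‖)) ^ δ * (2 * Mφ) ^ (1 - δ) := by
              gcongr
          _ = K * c ^ δ * ‖y‖ ^ δ := by
              rw [Real.mul_rpow hC0 (by positivity), Real.mul_rpow hc0.le (norm_nonneg _), hK]; ring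
      rw [mul_min_of_nonneg _ _ hKc]
      refine le_min b3 ?_
      rcases hKc.eq_or_lt with h0 | h0
      · rw [← h0] at b3 ⊢; simpa using b3
      · rw [mul_add, mul_div_cancel₀ _ h0.ne']; linarith
    have h1 := iter_cmp μ hμ hφg (good_min δ _ hδ0 hδ1 hR) c (K * c ^ δ) (φ x) x hKc hb j 0
    rw [smul_zero, add_zero] at h1
    refine h1.trans ?_
    refine (mul_le_mul_of_nonneg_left (hmom j hj _ hR) hKc).trans (le_of_eq ?_)
    rw [hcδ, Real.mul_rpow (by positivity) hh0.le]; ring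
  have hun : ∀ n : ℕ, ∀ t : ℝ, n * h ≤ t → t < (n + 1) * h → u t = (SOp μ c)^[n] φ := by
    intro n
    induction n with
    | zero =>
      intro t h1 h2
      funext x
      exact hu0 t (by simpa using h1) (by simpa using h2) x
    | succ n ih =>
      intro t h1 h2
      push_cast at h1 h2
      have hn : 0 ≤ (n : ℝ) * h := by positivity
      funext x
      rw [Function.iterate_succ_apply', hurec t (by linarith) x,
        ih (t - h) (by linarith) (by linarith)]
      rfl
  have main : ∀ s t : ℝ, 0 ≤ s → s ≤ t → ∀ x, |u t x - u s x| ≤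
      K * Mδ * (|t - s| ^ (δ / α) + h ^ (δ / α)) := by
    intro s t hs hst x
    have ht : 0 ≤ t := hs.trans hst
    have fl : ∀ r : ℝ, 0 ≤ r → (⌊r / h⌋₊ : ℝ) * h ≤ r ∧ r < (⌊r / h⌋₊ + 1) * h := fun r hr =>
      ⟨(le_div_iff₀ hh0).1 (Nat.floor_le (by positivity)),
        (div_lt_iff₀ hh0).1 (Nat.lt_floor_add_one _)⟩
    have hmn : ⌊s / h⌋₊ ≤ ⌊t / h⌋₊ := Nat.floor_mono (by gcongr)
    obtain ⟨j, hj⟩ := Nat.exists_eq_add_of_le hmn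
    obtain ⟨s1, s2⟩ := fl s hs
    obtain ⟨t1, t2⟩ := fl t ht
    rw [hun _ t t1 t2, hun _ s s1 s2]
    rw [hj] at t1 ⊢
    push_cast at t1
    have hjh : (j : ℝ) * h ≤ (t - s) + h := by linarith
    rw [Function.iterate_add_apply]
    have e1 := est j
    have c1 := iter_contr μ hμ (hφg.iter μ hμ c j) hφg c (K * Mδ * ((j : ℝ) * h) ^ (δ / α))
      (fun x => by linarith [(abs_le.1 (e1 x)).2]) ⌊s / h⌋₊ x
    have c2 := iter_contr μ hμ hφg (hφg.iter μ hμ c j) c (K * Mδ * ((j : ℝ) * h) ^ (δ / α))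
      (fun x => by linarith [(abs_le.1 (e1 x)).1]) ⌊s / h⌋₊ x
    have hfin : K * Mδ * ((j : ℝ) * h) ^ (δ / α) ≤
        K * Mδ * (|t - s| ^ (δ / α) + h ^ (δ / α)) := by
      rw [abs_of_nonneg (by linarith)]
      refine mul_le_mul_of_nonneg_left ?_ (by positivity)
      exact (Real.rpow_le_rpow (by positivity) hjh hda0.le).trans
        (Real.rpow_add_le_add_rpow (by linarith) hh0.le hda0.le hda)
    refine le_trans ?_ hfin
    rw [abs_le]
    constructor
    · linarith [c2]
    · linarith [c1]
  intro t ht s hs x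
  rcases le_total s t with hst | hst
  · exact main s t hs.1 hst x
  · rw [abs_sub_comm, abs_sub_comm t s]; exact main t s ht.1 hst x
end

section
/- Let p > 1, C > 0 and let v : ℝ × ℝ^d → ℝ be a bounded measurable function satisfying |v(t,x) − v(s,y)| ≤ C(|t−s|^{1/p} + |x−y|) for all t, s ∈ ℝ and x, y ∈ ℝ^d. Let ε ∈ (0,1) and let l, k be nonnegative integers with l + k ≥ 1. Then the mollification v^ε is smooth and for every (t,x) ∈ ℝ × ℝ^d the mixed derivative ∂_t^l D_x^k v^ε (the l-th time derivative of the k-th spatial Fréchet derivative) satisfies ‖∂_t^l D_x^k v^ε(t,x)‖ ≤ 2C M_{ζ,l,k} ε^{1 − pl − k}, where M_{ζ,l,k} := ∫_{ℝ×ℝ^d} ‖∂_t^l D_x^k ζ(τ,e)‖ de dτ. -/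
open MeasureTheory Set

namespace MollAux

set_option linter.unusedSectionVars false

open scoped Convolution

variable {G : Type} [NormedAddCommGroup G] [NormedSpace ℝ G] [FiniteDimensional ℝ G]
  [MeasureSpace G] [BorelSpace G] [(volume : Measure G).IsAddHaarMeasure]
  {F : Type} [NormedAddCommGroup F] [NormedSpace ℝ F] [CompleteSpace F]
  {F' : Type} [NormedAddCommGroup F'] [NormedSpace ℝ F'] [CompleteSpace F']

/-- convolution -/
noncomputable def Cv (V : G → ℝ) (g : G → F) (q : G) : F := ∫ r, V (q - r) • g r

/-- bounded measurable -/
def BM (V : G → ℝ) : Prop := Measurable V ∧ ∃ M, ∀ q, |V q| ≤ M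

/-- smooth supported in K -/
def SK (K : Set G) (g : G → F) : Prop := ContDiff ℝ (⊤ : ℕ∞) g ∧ tsupport g ⊆ K

theorem SK.hcs {K : Set G} (hK : IsCompact K) {g : G → F} (hg : SK K g) : HasCompactSupport g :=
  hK.of_isClosed_subset (isClosed_tsupport g) hg.2

theorem SK.integrable {K : Set G} (hK : IsCompact K) {g : G → F} (hg : SK K g) : Integrable g :=
  hg.1.continuous.integrable_of_hasCompactSupport (hg.hcs hK)

theorem integrable_cv {V : G → ℝ} (hV : BM V) {K : Set G} (hK : IsCompact K) {g : G → F}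
    (hg : SK K g) (q : G) : Integrable (fun r => V (q - r) • g r) := by
  obtain ⟨hm, M, hM⟩ := hV
  refine (hg.integrable hK).bdd_smul M (φ := fun r => V (q - r)) ?_ ?_
  · exact (hm.comp (measurable_const.sub measurable_id)).aestronglyMeasurable
  · exact Filter.Eventually.of_forall fun r => by simpa using hM (q - r)

theorem BM.locInt {V : G → ℝ} (hV : BM V) : LocallyIntegrable V := by
  obtain ⟨hm, M, hM⟩ := hV
  exact (memLp_top_of_bound hm.aestronglyMeasurable M
    (Filter.Eventually.of_forall fun r => by simpa using hM r)).locallyIntegrable le_top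

theorem Cv_eq (V : G → ℝ) (g : G → F) :
    Cv V g = (V ⋆[ContinuousLinearMap.lsmul ℝ ℝ, volume] g) := by
  ext q
  rw [convolution_eq_swap]
  rfl

theorem Cv_contDiff {V : G → ℝ} (hV : BM V) {K : Set G} (hK : IsCompact K) {g : G → F}
    (hg : SK K g) : ContDiff ℝ (⊤ : ℕ∞) (Cv V g) := by
  rw [Cv_eq]
  exact (hg.hcs hK).contDiff_convolution_right _ hV.locInt hg.1

theorem Cv_clm {V : G → ℝ} (hV : BM V) {K : Set G} (hK : IsCompact K) {g : G → F}
    (hg : SK K g) (L : F →L[ℝ] F') (q : G) : L (Cv V g q) = Cv V (fun r => L (g r)) q := by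
  unfold Cv
  rw [← L.integral_comp_comm (integrable_cv hV hK hg q)]
  simp

theorem SK.clm {K : Set G} {g : G → F} (hg : SK K g) (L : F →L[ℝ] F') :
    SK K (fun r => L (g r)) := by
  refine ⟨L.contDiff.comp hg.1, (closure_mono ?_).trans hg.2⟩
  intro r hr h0
  apply hr
  simp [h0]

theorem SK.fderiv {K : Set G} {g : G → F} (hg : SK K g) : SK K (fderiv ℝ g) :=
  ⟨hg.1.fderiv_right (by norm_cast), (tsupport_fderiv_subset ℝ).trans hg.2⟩

theorem Cv_fderiv {V : G → ℝ} (hV : BM V) {K : Set G} (hK : IsCompact K) {g : G → F}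
    (hg : SK K g) (q : G) : _root_.fderiv ℝ (Cv V g) q = Cv V (_root_.fderiv ℝ g) q := by
  rw [Cv_eq, ((hg.hcs hK).hasFDerivAt_convolution_right _ hV.locInt
    (hg.1.of_le (by norm_cast)) q).fderiv, convolution_eq_swap]
  rfl

variable {E : Type} [NormedAddCommGroup E] [NormedSpace ℝ E] [FiniteDimensional ℝ E]
  [MeasureSpace E] [BorelSpace E] [(volume : Measure E).IsAddHaarMeasure]

instance instHaarProd : (volume : Measure (ℝ × E)).IsAddHaarMeasure :=
  Measure.prod.instIsAddHaarMeasure (volume : Measure ℝ) (volume : Measure E)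

/-- spatial derivative -/
noncomputable def Sp (k : ℕ) (f : ℝ × E → ℝ) (q : ℝ × E) : E [×k]→L[ℝ] ℝ :=
  iteratedFDeriv ℝ k (fun y => f (q.1, y)) q.2

/-- time derivative -/
noncomputable def Ti (l : ℕ) (f : ℝ × E → F) (q : ℝ × E) : F :=
  iteratedDeriv l (fun s => f (s, q.2)) q.1

noncomputable def LamS (E : Type) [NormedAddCommGroup E] [NormedSpace ℝ E] (k : ℕ) :
    ((ℝ × E) →L[ℝ] (E [×k]→L[ℝ] ℝ)) →L[ℝ] (E [×(k+1)]→L[ℝ] ℝ) :=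
  ((continuousMultilinearCurryLeftEquiv ℝ (fun _ : Fin (k+1) => E) ℝ).symm.toContinuousLinearEquiv :
      (E →L[ℝ] (E [×k]→L[ℝ] ℝ)) →L[ℝ] (E [×(k+1)]→L[ℝ] ℝ)).comp
    ((ContinuousLinearMap.compL ℝ E (ℝ × E) (E [×k]→L[ℝ] ℝ)).flip (ContinuousLinearMap.inr ℝ ℝ E))

theorem Sp_succ (k : ℕ) (f : ℝ × E → ℝ) (hf : Differentiable ℝ (Sp k f)) :
    Sp (k+1) f = fun q => LamS E k (fderiv ℝ (Sp k f) q) := by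
  ext1 q
  unfold Sp
  rw [iteratedFDeriv_succ_eq_comp_left]
  have h1 : HasFDerivAt (fun y => Sp k f (q.1, y))
      ((fderiv ℝ (Sp k f) q).comp (ContinuousLinearMap.inr ℝ ℝ E)) q.2 := by
    have := (hf q).hasFDerivAt
    exact HasFDerivAt.comp (x := q.2) (f := fun y : E => (q.1, y)) (g := Sp k f) this
      (hasFDerivAt_prodMk_right q.1 q.2)
  have h2 : fderiv ℝ (iteratedFDeriv ℝ k (fun y => f (q.1, y))) q.2 = _ := h1.fderiv
  simp only [Function.comp, h2]
  rfl

theorem Ti_succ (l : ℕ) (f : ℝ × E → F) (hf : Differentiable ℝ (Ti l f)) :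
    Ti (l+1) f = fun q => ContinuousLinearMap.apply ℝ F ((1, 0) : ℝ × E) (fderiv ℝ (Ti l f) q) := by
  ext1 q
  unfold Ti
  rw [iteratedDeriv_succ]
  have h1 : HasDerivAt (fun s => Ti l f (s, q.2)) (fderiv ℝ (Ti l f) q (1, 0)) q.1 := by
    have := (hf q).hasFDerivAt
    exact HasFDerivAt.comp_hasDerivAt (x := q.1) (f := fun y : ℝ => (y, q.2)) (l := Ti l f) this
      ((hasDerivAt_id q.1).prodMk (hasDerivAt_const _ _))
  exact h1.deriv

theorem SK.diff {K : Set G} {g : G → F} (hg : SK K g) : Differentiable ℝ g :=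
  hg.1.differentiable (by simp)

theorem Cv_diff {V : G → ℝ} (hV : BM V) {K : Set G} (hK : IsCompact K) {g : G → F}
    (hg : SK K g) : Differentiable ℝ (Cv V g) :=
  (Cv_contDiff hV hK hg).differentiable (by simp)

theorem Sp_Cv {V : ℝ × E → ℝ} (hV : BM V) {K : Set (ℝ × E)} (hK : IsCompact K) {g : ℝ × E → ℝ}
    (hg : SK K g) (k : ℕ) : SK K (Sp k g) ∧ Sp k (Cv V g) = Cv V (Sp k g) := by
  induction k with
  | zero =>
    have h (f : ℝ × E → ℝ) : Sp 0 f = fun q => ((continuousMultilinearCurryFin0 ℝ E ℝ).symm.toContinuousLinearEquiv : ℝ →L[ℝ] _) (f q) := by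
      ext1 q; simp [Sp, iteratedFDeriv_zero_eq_comp]
    rw [h, h]
    refine ⟨hg.clm _, ?_⟩
    ext1 q
    exact Cv_clm hV hK hg _ q
  | succ k ih =>
    obtain ⟨h1, h2⟩ := ih
    have h3 := Cv_diff hV hK h1
    rw [Sp_succ k g h1.diff, Sp_succ k (Cv V g) (h2 ▸ h3), h2]
    refine ⟨h1.fderiv.clm _, ?_⟩
    ext1 q
    rw [Cv_fderiv hV hK h1, Cv_clm hV hK h1.fderiv]

theorem Ti_Cv {V : ℝ × E → ℝ} (hV : BM V) {K : Set (ℝ × E)} (hK : IsCompact K) {g : ℝ × E → F}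
    (hg : SK K g) (k : ℕ) : SK K (Ti k g) ∧ Ti k (Cv V g) = Cv V (Ti k g) := by
  induction k with
  | zero =>
    have h (f : ℝ × E → F) : Ti 0 f = f := by
      ext1 q; simp [Ti]
    rw [h, h]
    exact ⟨hg, rfl⟩
  | succ k ih =>
    obtain ⟨h1, h2⟩ := ih
    have h3 := Cv_diff hV hK h1
    rw [Ti_succ k g h1.diff, Ti_succ k (Cv V g) (h2 ▸ h3), h2]
    refine ⟨h1.fderiv.clm _, ?_⟩
    ext1 q
    rw [Cv_fderiv hV hK h1, Cv_clm hV hK h1.fderiv]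

theorem TS_Cv {V : ℝ × E → ℝ} (hV : BM V) {K : Set (ℝ × E)} (hK : IsCompact K) {g : ℝ × E → ℝ}
    (hg : SK K g) (l k : ℕ) :
    SK K (Ti l (Sp k g)) ∧ Ti l (Sp k (Cv V g)) = Cv V (Ti l (Sp k g)) := by
  obtain ⟨h1, h2⟩ := Sp_Cv hV hK hg k
  rw [h2]
  exact Ti_Cv hV hK h1 l

theorem TS_int {K : Set (ℝ × E)} (hK : IsCompact K) {g : ℝ × E → ℝ}
    (hg : SK K g) (l k : ℕ) (hlk : 1 ≤ l + k) : ∫ q, Ti l (Sp k g) q = 0 := by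
  have hV : BM (fun _ : ℝ × E => (1:ℝ)) := ⟨measurable_const, 1, by simp⟩
  have h := congrFun (TS_Cv hV hK hg l k).2 0
  simp only [Cv, one_smul] at h
  rw [← h]
  have hc : Cv (fun _ : ℝ × E => (1:ℝ)) g = fun _ => ∫ r, g r := by
    ext q; simp [Cv]
  rw [hc]
  unfold Ti Sp
  rcases Nat.eq_zero_or_pos l with rfl | hl
  · simp only [iteratedDeriv_zero]
    rw [iteratedFDeriv_const_of_ne (by lia)]
    rfl
  · dsimp only
    rw [iteratedDeriv_const]
    simp [hl.ne']

theorem Cv_bound {V : G → ℝ} (hV : BM V) {K : Set G} (hK : IsCompact K) {g : G → F}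
    (hg : SK K g) (h0 : ∫ q, g q = 0) (B : ℝ)
    (hB : ∀ q, ∀ r ∈ K, |V (q - r) - V q| ≤ B) (q : G) :
    ‖Cv V g q‖ ≤ B * ∫ r, ‖g r‖ := by
  have hi := hg.integrable hK
  have : Cv V g q = ∫ r, (V (q - r) - V q) • g r := by
    simp only [sub_smul]
    have hi2 : Integrable (fun r => V q • g r) := hi.smul (V q)
    rw [integral_sub (integrable_cv hV hK hg q) hi2, integral_smul, h0]
    simp [Cv]
  rw [this, ← integral_const_mul]
  refine norm_integral_le_of_norm_le (hi.norm.const_mul B) (Filter.Eventually.of_forall fun r => ?_)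
  rw [norm_smul]
  by_cases hr : r ∈ K
  · gcongr
    exact hB q r hr
  · have : g r = 0 := image_eq_zero_of_notMem_tsupport fun h => hr (hg.2 h)
    simp [this]

theorem TS_bound {V : ℝ × E → ℝ} (hV : BM V) {K : Set (ℝ × E)} (hK : IsCompact K) {g : ℝ × E → ℝ}
    (hg : SK K g) (l k : ℕ) (hlk : 1 ≤ l + k) (B : ℝ)
    (hB : ∀ q, ∀ r ∈ K, |V (q - r) - V q| ≤ B) (q : ℝ × E) :
    ‖Ti l (Sp k (Cv V g)) q‖ ≤ B * ∫ t, ∫ e, ‖Ti l (Sp k g) (t, e)‖ := by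
  obtain ⟨h1, h2⟩ := TS_Cv hV hK hg l k
  have h0 := TS_int hK hg l k hlk
  rw [h2, ← integral_prod (fun r => ‖Ti l (Sp k g) r‖) (h1.integrable hK).norm]
  exact Cv_bound hV hK h1 h0 B hB q

theorem TS_scale {W : ℝ × E → ℝ} (hW : ContDiff ℝ (⊤ : ℕ∞) W) (l k : ℕ)
    (hS : ContDiff ℝ (⊤ : ℕ∞) (Sp k W)) (a b : ℝ) (q : ℝ × E) :
    Ti l (Sp k (fun q => W (a * q.1, b • q.2))) q = (b ^ k * a ^ l) • Ti l (Sp k W) (a * q.1, b • q.2) := by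
  have h1 (q : ℝ × E) : Sp k (fun q => W (a * q.1, b • q.2)) q = b ^ k • Sp k W (a * q.1, b • q.2) := by
    unfold Sp
    have hc : ContDiff ℝ k (fun y => W (a * q.1, y)) :=
      (hW.comp (contDiff_const.prodMk contDiff_id)).of_le (by exact_mod_cast le_top)
    have := congrFun (iteratedFDeriv_comp_const_smul b hc) q.2
    simpa using this
  unfold Ti
  simp only [h1]
  rw [iteratedDeriv_fun_const_smul_field]
  have hc : ContDiff ℝ l (fun s => Sp k W (s, b • q.2)) :=
      (hS.comp (contDiff_id.prodMk contDiff_const)).of_le (by exact_mod_cast le_top)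
  have := congrFun (iteratedDeriv_comp_const_smul hc a) q.1
  rw [this, smul_smul]

end MollAux

open MollAux in
/-- Standard mollifier derivative estimates:
`‖∂_t^l D_x^k v^ε‖ ≤ 2 C M_{ζ,l,k} ε^{1 - pl - k}`, and `v^ε` is smooth. -/
theorem stmt_4 {d : ℕ} (hd : 1 ≤ d)
    (ζ : ℝ × EuclideanSpace ℝ (Fin d) → ℝ)
    (hζsmooth : ContDiff ℝ (⊤ : ℕ∞) ζ)
    (hζnonneg : ∀ q, 0 ≤ ζ q)
    (hζint : ∫ q : ℝ × EuclideanSpace ℝ (Fin d), ζ q = 1)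
    (hζsupp : Function.support ζ ⊆
      Set.Icc (-1:ℝ) 0 ×ˢ Metric.closedBall (0 : EuclideanSpace ℝ (Fin d)) 1)
    (p C : ℝ) (hp : 1 < p) (hC : 0 < C)
    (v : ℝ → EuclideanSpace ℝ (Fin d) → ℝ)
    (hvm : Measurable (Function.uncurry v))
    (hvb : ∃ M, ∀ t x, |v t x| ≤ M)
    (hvh : ∀ t s x y, |v t x - v s y| ≤ C * (|t - s| ^ (1/p) + ‖x - y‖))
    (ε : ℝ) (hε : ε ∈ Set.Ioo (0:ℝ) 1)
    (vε : ℝ → EuclideanSpace ℝ (Fin d) → ℝ)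
    (hvε : ∀ t x, vε t x = ∫ (τ : ℝ), ∫ (e : EuclideanSpace ℝ (Fin d)),
      v (t - τ) (x - e) * (ε ^ (-(p + (d:ℝ))) * ζ (τ / ε ^ p, ε⁻¹ • e)))
    (l k : ℕ) (hlk : 1 ≤ l + k) :
    ContDiff ℝ (⊤ : ℕ∞) (fun q : ℝ × EuclideanSpace ℝ (Fin d) => vε q.1 q.2) ∧
    ∀ t x,
      ‖iteratedDeriv l (fun σ => iteratedFDeriv ℝ k (fun y => vε σ y) x) t‖ ≤
      2 * C *
        (∫ (τ : ℝ), ∫ (e : EuclideanSpace ℝ (Fin d)),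
          ‖iteratedDeriv l (fun σ => iteratedFDeriv ℝ k (fun e' => ζ (σ, e')) e) τ‖) *
        ε ^ (1 - p * (l : ℝ) - (k : ℝ)) := by
  obtain ⟨hε0, hε1⟩ := hε
  set a : ℝ := ε ^ p with ha
  have ha0 : 0 < a := Real.rpow_pos_of_pos hε0 p
  set V : ℝ × EuclideanSpace ℝ (Fin d) → ℝ := fun q => v (a * q.1) (ε • q.2) with hVdef
  obtain ⟨M, hM⟩ := hvb
  have hV : BM V := by
    refine ⟨?_, M, fun q => hM _ _⟩
    exact hvm.comp (f := fun q : ℝ × EuclideanSpace ℝ (Fin d) => (a * q.1, ε • q.2)) (by fun_prop)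
  set K : Set (ℝ × EuclideanSpace ℝ (Fin d)) := Set.Icc (-1:ℝ) 0 ×ˢ Metric.closedBall 0 1 with hKdef
  have hK : IsCompact K := isCompact_Icc.prod (isCompact_closedBall _ _)
  have hζ : SK K ζ := ⟨hζsmooth, closure_minimal hζsupp hK.isClosed⟩
  have hW := Cv_contDiff hV hK hζ
  have hS : ContDiff ℝ (⊤ : ℕ∞) (Sp k (Cv V ζ)) := by
    obtain ⟨h1, h2⟩ := Sp_Cv hV hK hζ k
    rw [h2]
    exact Cv_contDiff hV hK h1
  have hB : ∀ q, ∀ r ∈ K, |V (q - r) - V q| ≤ 2 * C * ε := by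
    rintro ⟨t, x⟩ ⟨τ, e⟩ ⟨hτ, he⟩
    simp only [mem_closedBall_zero_iff, Set.mem_Icc] at hτ he
    refine (hvh _ _ _ _).trans ?_
    have e1 : a * (t - τ) - a * t = a * (-τ) := by ring
    have e2 : ε • (x - e) - ε • x = -(ε • e) := by rw [smul_sub]; abel
    simp only [Prod.mk_sub_mk]
    rw [e1, e2, norm_neg, norm_smul, Real.norm_of_nonneg hε0.le]
    have hτ1 : |a * (-τ)| ≤ a := by
      rw [abs_mul, abs_of_pos ha0, abs_of_nonneg (by linarith)]
      nlinarith
    have h1 : |a * (-τ)| ^ (1/p) ≤ ε := by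
      calc |a * (-τ)| ^ (1/p) ≤ a ^ (1/p) := by
            apply Real.rpow_le_rpow (abs_nonneg _) hτ1; positivity
        _ = ε := by
          rw [ha, ← Real.rpow_mul hε0.le, mul_one_div_cancel (by linarith), Real.rpow_one]
    have h2 : ε * ‖e‖ ≤ ε := by nlinarith
    nlinarith
  have key : ∀ t x, vε t x = Cv V ζ (a⁻¹ * t, ε⁻¹ • x) := by
    intro t x
    have hin : ∀ τ, ∫ (e : EuclideanSpace ℝ (Fin d)),
        v (t - τ) (x - e) * (ε ^ (-(p + (d:ℝ))) * ζ (τ / a, ε⁻¹ • e)) =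
        ε ^ (-p) * ∫ (e : EuclideanSpace ℝ (Fin d)), v (t - τ) (x - ε • e) * ζ (τ / a, e) := by
      intro τ
      have := Measure.integral_comp_inv_smul_of_nonneg (volume : Measure (EuclideanSpace ℝ (Fin d)))
        (fun e => v (t - τ) (x - ε • e) * (ε ^ (-(p + (d:ℝ))) * ζ (τ / a, e))) hε0.le
      simp only [smul_inv_smul₀ hε0.ne'] at this
      rw [this, smul_eq_mul, ← integral_const_mul, ← integral_const_mul]
      congr 1
      ext e
      have : ε ^ (-p) = ε ^ d * ε ^ (-(p + (d:ℝ))) := by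
        rw [← Real.rpow_natCast, ← Real.rpow_add hε0]; congr 1; ring
      rw [finrank_euclideanSpace_fin, this]
      ring
    rw [hvε]
    simp only [hin]
    have := Measure.integral_comp_div (fun τ => ε ^ (-p) * ∫ (e : EuclideanSpace ℝ (Fin d)), v (t - a * τ) (x - ε • e) * ζ (τ, e)) a
    have e3 : ∀ τ, a * (τ / a) = τ := fun τ => by field_simp
    simp only [e3] at this
    rw [this, integral_const_mul, abs_of_pos ha0, smul_eq_mul, ← mul_assoc, Real.rpow_neg hε0.le, mul_inv_cancel₀ ha0.ne',
      one_mul]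
    unfold Cv
    rw [Measure.volume_eq_prod, integral_prod _ (by
      rw [← Measure.volume_eq_prod]
      exact integrable_cv hV hK hζ _)]
    simp only [hVdef, Prod.mk_sub_mk, mul_sub, smul_sub, smul_eq_mul, mul_inv_cancel_left₀ ha0.ne',
      smul_inv_smul₀ hε0.ne']
  have hfun : (fun q : ℝ × EuclideanSpace ℝ (Fin d) => vε q.1 q.2) =
      fun q => Cv V ζ (a⁻¹ * q.1, ε⁻¹ • q.2) := by
    ext q; exact key _ _
  refine ⟨?_, fun t x => ?_⟩
  · rw [hfun]
    exact hW.comp ((contDiff_const.mul contDiff_fst).prodMk (contDiff_snd.const_smul _))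
  · have h1 := TS_scale hW l k hS a⁻¹ ε⁻¹ (t, x)
    rw [← hfun] at h1
    have h2 := TS_bound hV hK hζ l k hlk _ hB (a⁻¹ * t, ε⁻¹ • x)
    change ‖Ti l (Sp k (fun q : ℝ × EuclideanSpace ℝ (Fin d) => vε q.1 q.2)) (t, x)‖ ≤
      2 * C * (∫ τ, ∫ e, ‖Ti l (Sp k ζ) (τ, e)‖) * _
    have hpos : 0 < ε⁻¹ ^ k * a⁻¹ ^ l := by positivity
    have hexp : ε ^ (1 - p * (l : ℝ) - (k : ℝ)) = ε * (ε⁻¹ ^ k * a⁻¹ ^ l) := by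
      rw [Real.rpow_sub hε0, Real.rpow_sub hε0, Real.rpow_one, Real.rpow_mul hε0.le,
        Real.rpow_natCast, Real.rpow_natCast, inv_pow, inv_pow]
      rw [← ha]
      field_simp
    rw [h1, norm_smul, Real.norm_of_nonneg hpos.le, hexp]
    calc _ ≤ _ := mul_le_mul_of_nonneg_left h2 hpos.le
      _ = _ := by ring
end

section
/- Let α ∈ (0,2), δ ∈ (0,1], h ∈ (0,1), and assume M_δ := sup_{k∈Λ} ∫_{ℝ^d} |z|^δ dμ_k(z) < ∞. Let w : ℝ × ℝ^d → ℝ be a bounded twice continuously differentiable function such that ∂_t w, ∂_t² w and the spatial gradient ∇_x ∂_t w are bounded. Then for every t ∈ ℝ and x ∈ ℝ^d, | ∂_t w(t,x) · h + sup_{k∈Λ} ∫_{ℝ^d} w(t−h, x + h^{1/α} z) dμ_k(z) − sup_{k∈Λ} ∫_{ℝ^d} w(t, x + h^{1/α} z) dμ_k(z) | ≤ (1/2) ‖∂_t² w‖_∞ h² + ‖∇_x ∂_t w‖_∞^δ (2‖∂_t w‖_∞)^{1−δ} M_δ h^{1 + δ/α}. -/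
open MeasureTheory Set

lemma aux_taylor (f f' f'' : ℝ → ℝ) (h1 : ∀ s, HasDerivAt f (f' s) s)
    (h2 : ∀ s, HasDerivAt f' (f'' s) s) (A : ℝ) (hA : ∀ s, |f'' s| ≤ A) (t h : ℝ) (hh : 0 ≤ h) :
    |f (t - h) - f t + h * f' t| ≤ 1 / 2 * A * h ^ 2 := by
  have hlip : ∀ a b, |f' a - f' b| ≤ A * |a - b| := by
    intro a b
    have := Convex.norm_image_sub_le_of_norm_hasDerivWithin_le (f := f') (f' := f'') (s := univ)
      (C := A) (x := b) (y := a) (fun x _ => (h2 x).hasDerivWithinAt) (fun x _ => hA x)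
      convex_univ (mem_univ _) (mem_univ _)
    simpa [Real.norm_eq_abs] using this
  have hg : ∀ s, HasDerivAt (fun s => f (t - s) - f t + s * f' t) (-(f' (t - s)) + f' t) s := by
    intro s
    have e1 : HasDerivAt (fun s => f (t - s)) (-(f' (t - s))) s := by
      simpa using (h1 (t - s)).comp_const_sub t s
    have e2 : HasDerivAt (fun s => s * f' t) (f' t) s := by
      simpa using (hasDerivAt_id s).mul_const (f' t)
    exact (e1.sub_const _).add e2
  have hB : ∀ s, HasDerivAt (fun s : ℝ => 1 / 2 * A * s ^ 2) (A * s) s := by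
    intro s
    have := (hasDerivAt_pow 2 s).const_mul (1 / 2 * A)
    refine this.congr_deriv ?_
    norm_num
    ring
  have := image_norm_le_of_norm_deriv_right_le_deriv_boundary (a := 0) (b := h)
    (f := fun s => f (t - s) - f t + s * f' t) (f' := fun s => -(f' (t - s)) + f' t)
    (B := fun s : ℝ => 1 / 2 * A * s ^ 2) (B' := fun s => A * s)
    (fun s _ => (hg s).continuousAt.continuousWithinAt)
    (fun s _ => (hg s).hasDerivWithinAt) (by simp) hB
    (by
      intro s hs
      have := hlip t (t - s)
      rw [Real.norm_eq_abs, neg_add_eq_sub]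
      rwa [sub_sub_cancel, abs_of_nonneg hs.1] at this)
    (x := h) ⟨hh, le_rfl⟩
  simpa [Real.norm_eq_abs] using this

lemma aux_sup {ι : Type*} [Nonempty ι] (I J : ι → ℝ) (hI : BddAbove (range I))
    (hJ : BddAbove (range J)) (a C : ℝ) (h : ∀ k, |a + I k - J k| ≤ C) :
    |a + (⨆ k, I k) - ⨆ k, J k| ≤ C := by
  have h1 : (⨆ k, I k) ≤ C - a + ⨆ k, J k := ciSup_le fun k => by
    have := le_ciSup hJ k
    have := (abs_le.1 (h k)).2
    linarith
  have h2 : (⨆ k, J k) ≤ C + a + ⨆ k, I k := ciSup_le fun k => by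
    have := le_ciSup hI k
    have := (abs_le.1 (h k)).1
    linarith
  rw [abs_le]
  constructor <;> linarith

lemma aux_interp (D G r B δ : ℝ) (hD : 0 ≤ D) (hG : 0 ≤ G) (hr : 0 ≤ r)
    (hδ : δ ∈ Ioc (0:ℝ) 1) (h1 : D ≤ G * r) (h2 : D ≤ B) :
    D ≤ G ^ δ * B ^ (1 - δ) * r ^ δ := by
  have e : D = D ^ δ * D ^ (1 - δ) := by
    rw [← Real.rpow_add_of_nonneg hD hδ.1.le (by linarith [hδ.2])]
    simp
  calc D = D ^ δ * D ^ (1 - δ) := e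
    _ ≤ (G * r) ^ δ * B ^ (1 - δ) := by
      have := hδ.1.le
      have : 0 ≤ 1 - δ := by linarith [hδ.2]
      gcongr
    _ = _ := by rw [Real.mul_rpow hG hr]; ring

/-- Consistency estimate for the time-derivative part `R₁` of the scheme. -/
theorem stmt_5 {d : ℕ} (hd : 1 ≤ d) {Λ : Type*} [Nonempty Λ]
    (μ : Λ → Measure (EuclideanSpace ℝ (Fin d)))
    (hμ : ∀ k, IsProbabilityMeasure (μ k))
    (α δ h : ℝ) (hα : α ∈ Set.Ioo (0:ℝ) 2) (hδ : δ ∈ Set.Ioc (0:ℝ) 1)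
    (hh : h ∈ Set.Ioo (0:ℝ) 1)
    (Mδ : ℝ)
    (hMδint : ∀ k, Integrable (fun z => ‖z‖ ^ δ) (μ k))
    (hMδ : ∀ k, (∫ z, ‖z‖ ^ δ ∂(μ k)) ≤ Mδ)
    (w : ℝ → EuclideanSpace ℝ (Fin d) → ℝ)
    (hw : ContDiff ℝ 2 (fun q : ℝ × EuclideanSpace ℝ (Fin d) => w q.1 q.2))
    (hwb : ∃ M, ∀ t x, |w t x| ≤ M)
    (hdtb : ∃ M, ∀ t x, |deriv (fun s => w s x) t| ≤ M)
    (hdttb : ∃ M, ∀ t x, |deriv (deriv (fun s => w s x)) t| ≤ M)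
    (hgradtb : ∃ M, ∀ t x, ‖fderiv ℝ (fun y => deriv (fun s => w s y) t) x‖ ≤ M) :
    ∀ t x,
      |deriv (fun s => w s x) t * h
        + (⨆ k, ∫ z, w (t - h) (x + h ^ (1/α) • z) ∂(μ k))
        - ⨆ k, ∫ z, w t (x + h ^ (1/α) • z) ∂(μ k)| ≤
      (1/2) * (⨆ q : ℝ × EuclideanSpace ℝ (Fin d),
          |deriv (deriv (fun s => w s q.2)) q.1|) * h ^ 2
      + (⨆ q : ℝ × EuclideanSpace ℝ (Fin d),
          ‖fderiv ℝ (fun y => deriv (fun s => w s y) q.1) q.2‖) ^ δ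
        * (2 * ⨆ q : ℝ × EuclideanSpace ℝ (Fin d), |deriv (fun s => w s q.2) q.1|) ^ (1 - δ)
        * Mδ * h ^ (1 + δ / α) := by
  intro t x
  obtain ⟨M, hM⟩ := hwb
  obtain ⟨B0, hB0⟩ := hdtb
  obtain ⟨A0, hA0⟩ := hdttb
  obtain ⟨G0, hG0⟩ := hgradtb
  set A := ⨆ q : ℝ × EuclideanSpace ℝ (Fin d), |deriv (deriv (fun s => w s q.2)) q.1| with hAdef
  set G := ⨆ q : ℝ × EuclideanSpace ℝ (Fin d),
          ‖fderiv ℝ (fun y => deriv (fun s => w s y) q.1) q.2‖ with hGdef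
  set B := ⨆ q : ℝ × EuclideanSpace ℝ (Fin d), |deriv (fun s => w s q.2) q.1| with hBdef
  have hA : ∀ t x, |deriv (deriv (fun s => w s x)) t| ≤ A := fun t x =>
    le_ciSup (f := fun q : ℝ × EuclideanSpace ℝ (Fin d) =>
      |deriv (deriv (fun s => w s q.2)) q.1|) ⟨A0, by rintro _ ⟨q, rfl⟩; exact hA0 _ _⟩ (t, x)
  have hB : ∀ t x, |deriv (fun s => w s x) t| ≤ B := fun t x =>
    le_ciSup (f := fun q : ℝ × EuclideanSpace ℝ (Fin d) =>
      |deriv (fun s => w s q.2) q.1|) ⟨B0, by rintro _ ⟨q, rfl⟩; exact hB0 _ _⟩ (t, x)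
  have hG : ∀ t x, ‖fderiv ℝ (fun y => deriv (fun s => w s y) t) x‖ ≤ G := fun t x =>
    le_ciSup (f := fun q : ℝ × EuclideanSpace ℝ (Fin d) =>
      ‖fderiv ℝ (fun y => deriv (fun s => w s y) q.1) q.2‖)
      ⟨G0, by rintro _ ⟨q, rfl⟩; exact hG0 _ _⟩ (t, x)
  have hG_nn : 0 ≤ G := (norm_nonneg _).trans (hG t x)
  have hB_nn : 0 ≤ B := (abs_nonneg _).trans (hB t x)
  -- regularity
  set F : ℝ × EuclideanSpace ℝ (Fin d) → ℝ := fun q => w q.1 q.2 with hF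
  have hd1 : ∀ s y, HasDerivAt (fun s => w s y) (fderiv ℝ F (s, y) (1, 0)) s := by
    intro s y
    have hf : HasFDerivAt F (fderiv ℝ F (s, y)) (s, y) :=
      ((hw.differentiable (by norm_num)) (s, y)).hasFDerivAt
    have hc : HasDerivAt (fun s : ℝ => (s, y)) ((1 : ℝ), (0 : EuclideanSpace ℝ (Fin d))) s :=
      (hasDerivAt_id s).prodMk (hasDerivAt_const s y)
    exact hf.comp_hasDerivAt s hc
  have hdF : ContDiff ℝ 1 (fun q : ℝ × EuclideanSpace ℝ (Fin d) =>
      deriv (fun s => w s q.2) q.1) := by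
    have : (fun q : ℝ × EuclideanSpace ℝ (Fin d) => deriv (fun s => w s q.2) q.1)
        = fun q => fderiv ℝ F q (1, 0) := by
      funext q
      exact (hd1 q.1 q.2).deriv
    rw [this]
    exact (hw.fderiv_right (m := 1) (by norm_num)).clm_apply contDiff_const
  have hdd := hdF.differentiable (by norm_num)
  have hTaylor : ∀ y, |w (t - h) y - w t y + h * deriv (fun s => w s y) t|
      ≤ 1 / 2 * A * h ^ 2 := by
    intro y
    refine aux_taylor (fun s => w s y) (deriv (fun s => w s y)) (deriv (deriv (fun s => w s y)))
      (fun s => (hd1 s y).differentiableAt.hasDerivAt) (fun s => ?_) A (fun s => hA s y) t h hh.1.le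
    apply DifferentiableAt.hasDerivAt
    have hc : DifferentiableAt ℝ (fun s : ℝ => (s, y)) s := by fun_prop
    exact (hdd (s, y)).comp s hc
  have hLip : ∀ y, |deriv (fun s => w s x) t - deriv (fun s => w s y) t| ≤ G * ‖y - x‖ := by
    intro y
    have := Convex.norm_image_sub_le_of_norm_fderiv_le (𝕜 := ℝ) (s := univ)
      (f := fun y => deriv (fun s => w s y) t) (C := G) (x := x) (y := y)
      (fun z _ => by
        have hc : DifferentiableAt ℝ (fun z : EuclideanSpace ℝ (Fin d) => (t, z)) z := by fun_prop
        exact (hdd (t, z)).comp z hc)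
      (fun z _ => hG t z) convex_univ (mem_univ _) (mem_univ _)
    rw [abs_sub_comm]
    exact this
  have hpos : 0 < h ^ (1 / α) := Real.rpow_pos_of_pos hh.1 _
  set K := G ^ δ * (2 * B) ^ (1 - δ) with hK
  have hK_nn : 0 ≤ K := by positivity
  have hpt : ∀ z, |deriv (fun s => w s x) t * h + w (t - h) (x + h ^ (1/α) • z)
      - w t (x + h ^ (1/α) • z)| ≤ 1 / 2 * A * h ^ 2 + K * h ^ (1 + δ / α) * ‖z‖ ^ δ := by
    intro z
    set y := x + h ^ (1/α) • z with hy
    have e1 := hTaylor y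
    have hn : ‖y - x‖ = h ^ (1/α) * ‖z‖ := by
      rw [hy, add_sub_cancel_left, norm_smul, Real.norm_of_nonneg hpos.le]
    have e2 := aux_interp _ G ‖y - x‖ (2 * B) δ (abs_nonneg _) hG_nn (norm_nonneg _) hδ (hLip y)
      (by
        have := abs_sub (deriv (fun s => w s x) t) (deriv (fun s => w s y) t)
        linarith [hB t x, hB t y])
    have e3 : h * ‖y - x‖ ^ δ = h ^ (1 + δ / α) * ‖z‖ ^ δ := by
      rw [hn, Real.mul_rpow hpos.le (norm_nonneg _), ← Real.rpow_mul hh.1.le, Real.rpow_add hh.1,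
        Real.rpow_one, show 1 / α * δ = δ / α by ring]
      ring
    have e4 : |h * (deriv (fun s => w s x) t - deriv (fun s => w s y) t)|
        ≤ K * h ^ (1 + δ / α) * ‖z‖ ^ δ := by
      rw [abs_mul, abs_of_pos hh.1, mul_assoc, ← e3]
      have := mul_le_mul_of_nonneg_left e2 hh.1.le
      linarith
    calc _ = |(w (t - h) y - w t y + h * deriv (fun s => w s y) t)
          + h * (deriv (fun s => w s x) t - deriv (fun s => w s y) t)| := by congr 1; ring
      _ ≤ _ := (abs_add_le _ _).trans (add_le_add e1 e4)
  have hint : ∀ s k, Integrable (fun z => w s (x + h ^ (1/α) • z)) (μ k) := by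
    intro s k
    have := hμ k
    have hc : Continuous (fun z => w s (x + h ^ (1/α) • z)) :=
      hw.continuous.comp (f := fun z => (s, x + h ^ (1/α) • z)) (by fun_prop)
    exact Integrable.of_bound hc.aestronglyMeasurable M (Filter.Eventually.of_forall fun z => hM _ _)
  have hbdd : ∀ s, BddAbove (range fun k => ∫ z, w s (x + h ^ (1/α) • z) ∂(μ k)) := by
    intro s
    refine ⟨M, ?_⟩
    rintro _ ⟨k, rfl⟩
    have := hμ k
    have := integral_mono (hint s k) (integrable_const M) (fun z => (abs_le.1 (hM s _)).2)
    simpa using this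
  refine aux_sup _ _ (hbdd _) (hbdd _) _ _ fun k => ?_
  have := hμ k
  have hi1 : Integrable (fun z => deriv (fun s => w s x) t * h + w (t - h) (x + h ^ (1/α) • z))
    (μ k) := (integrable_const _).add (hint _ k)
  have e : deriv (fun s => w s x) t * h + (∫ z, w (t - h) (x + h ^ (1/α) • z) ∂(μ k))
      - ∫ z, w t (x + h ^ (1/α) • z) ∂(μ k)
      = ∫ z, (deriv (fun s => w s x) t * h + w (t - h) (x + h ^ (1/α) • z)
      - w t (x + h ^ (1/α) • z)) ∂(μ k) := by
    rw [integral_sub hi1 (hint _ k), integral_add (integrable_const _) (hint _ k)]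
    simp
  rw [e]
  have hi2 : Integrable (fun z => K * h ^ (1 + δ / α) * ‖z‖ ^ δ) (μ k) := (hMδint k).const_mul _
  calc _ ≤ ∫ z, |deriv (fun s => w s x) t * h + w (t - h) (x + h ^ (1/α) • z)
      - w t (x + h ^ (1/α) • z)| ∂(μ k) := abs_integral_le_integral_abs
    _ ≤ ∫ z, (1 / 2 * A * h ^ 2 + K * h ^ (1 + δ / α) * ‖z‖ ^ δ) ∂(μ k) :=
      integral_mono (hi1.sub (hint _ k)).abs ((integrable_const _).add hi2) hpt
    _ = 1 / 2 * A * h ^ 2 + K * h ^ (1 + δ / α) * ∫ z, ‖z‖ ^ δ ∂(μ k) := by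
      rw [integral_add (integrable_const _) hi2, integral_const_mul (K * h ^ (1 + δ / α))]
      simp
    _ ≤ 1 / 2 * A * h ^ 2 + K * h ^ (1 + δ / α) * Mδ := by
      have : 0 ≤ h ^ (1 + δ / α) := Real.rpow_nonneg hh.1.le _
      gcongr
      exact hMδ k
    _ = _ := by ring
end

section
/- Let ε ∈ (0,1) and p > 1, and let u_h^ε denote the mollification of the scheme solution u_h (extended by the recursion to all t ≥ 0). Then for every t ≥ h and every x ∈ ℝ^d, sup_{k∈Λ} ∫_{ℝ^d} u_h^ε(t−h, x + h^{1/α} z) dμ_k(z) ≤ u_h^ε(t,x). -/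
open MeasureTheory Set

noncomputable def vseq {E : Type*} [NormedAddCommGroup E] [NormedSpace ℝ E] [MeasurableSpace E]
    {Λ : Type*} (μ : Λ → Measure E) (c : ℝ) (φ : E → ℝ) : ℕ → E → ℝ
  | 0 => φ
  | n + 1 => fun x => ⨆ k, ∫ z, vseq μ c φ n (x + c • z) ∂(μ k)

lemma lip_cont {E : Type*} [NormedAddCommGroup E] (f : E → ℝ) (C : ℝ)
    (hf : ∀ x y, |f x - f y| ≤ C * ‖x - y‖) : Continuous f := by
  have : LipschitzWith (Real.toNNReal C) f := by
    apply LipschitzWith.of_dist_le_mul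
    intro x y
    rw [Real.dist_eq, dist_eq_norm]
    exact (hf x y).trans (mul_le_mul_of_nonneg_right (Real.le_coe_toNNReal C) (norm_nonneg _))
  exact this.continuous

lemma int_bd {E : Type*} [MeasurableSpace E] (ν : Measure E) [IsProbabilityMeasure ν]
    (f : E → ℝ) (M : ℝ) (hM : ∀ x, |f x| ≤ M) : |∫ z, f z ∂ν| ≤ M := by
  have := norm_integral_le_of_norm_le_const (μ := ν) (f := f) (C := M)
    (Filter.Eventually.of_forall hM)
  simpa using this

lemma bdd_int {E : Type*} [MeasurableSpace E] {Λ : Type*} (μ : Λ → Measure E)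
    (hμ : ∀ k, IsProbabilityMeasure (μ k))
    (f : E → ℝ) (M : ℝ) (hM : ∀ x, |f x| ≤ M) :
    BddAbove (range fun k => ∫ z, f z ∂(μ k)) := by
  refine ⟨M, ?_⟩
  rintro _ ⟨k, rfl⟩
  have := hμ k
  exact (abs_le.1 (int_bd (μ k) f M hM)).2

lemma vseq_prop {E : Type*} [NormedAddCommGroup E] [NormedSpace ℝ E] [MeasurableSpace E]
    [BorelSpace E] [SecondCountableTopology E]
    {Λ : Type*} [Nonempty Λ] (μ : Λ → Measure E) (hμ : ∀ k, IsProbabilityMeasure (μ k))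
    (c : ℝ) (φ : E → ℝ) (M C : ℝ) (hb : ∀ x, |φ x| ≤ M)
    (hl : ∀ x y, |φ x - φ y| ≤ C * ‖x - y‖) (n : ℕ) :
    (∀ x, |vseq μ c φ n x| ≤ M) ∧
      (∀ x y, |vseq μ c φ n x - vseq μ c φ n y| ≤ C * ‖x - y‖) := by
  induction n with
  | zero => exact ⟨hb, hl⟩
  | succ n ih =>
    obtain ⟨h1, h2⟩ := ih
    have hc := lip_cont _ _ h2
    have bd : ∀ x, BddAbove (range fun k => ∫ z, vseq μ c φ n (x + c • z) ∂(μ k)) :=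
      fun x => bdd_int μ hμ _ M (fun z => h1 _)
    have hint : ∀ x k, Integrable (fun z => vseq μ c φ n (x + c • z)) (μ k) := by
      intro x k
      have := hμ k
      refine Integrable.of_bound (C := M) ?_ (Filter.Eventually.of_forall fun z => h1 _)
      exact (hc.comp (by fun_prop)).aestronglyMeasurable
    have key : ∀ x y, vseq μ c φ (n+1) x ≤ vseq μ c φ (n+1) y + C * ‖x - y‖ := by
      intro x y
      simp only [vseq]
      apply ciSup_le
      intro k
      have := hμ k
      have e1 : ∫ z, vseq μ c φ n (x + c • z) ∂(μ k) ≤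
          ∫ z, (vseq μ c φ n (y + c • z) + C * ‖x - y‖) ∂(μ k) := by
        apply integral_mono (hint x k) ((hint y k).add (integrable_const _))
        intro z
        have := (abs_le.1 (h2 (x + c • z) (y + c • z))).2
        simp only [add_sub_add_right_eq_sub] at this
        simp only [Pi.add_apply]
        linarith
      rw [integral_add (hint y k) (integrable_const _)] at e1
      simp only [integral_const, probReal_univ, one_smul] at e1
      have := le_ciSup (bd y) k
      linarith
    refine ⟨fun x => ?_, fun x y => ?_⟩
    · simp only [vseq]
      rw [abs_le]
      constructor
      · obtain ⟨k⟩ := ‹Nonempty Λ›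
        have := hμ k
        exact (abs_le.1 (int_bd (μ k) _ M (fun z => h1 (x + c • z)))).1.trans
          (le_ciSup (bd x) k)
      · apply ciSup_le
        intro k
        have := hμ k
        exact (abs_le.1 (int_bd (μ k) _ M (fun z => h1 (x + c • z)))).2
    · rw [abs_le]
      have a := key x y
      have b := key y x
      rw [norm_sub_rev] at b
      constructor <;> linarith

/-- The mollification of the scheme solution is a supersolution of the scheme:
`Ê[u_h^ε(t-h, x + h^{1/α} z)] ≤ u_h^ε(t,x)` for `t ≥ h`. -/
theorem stmt_6 {d : ℕ} (hd : 1 ≤ d) {Λ : Type*} [Nonempty Λ]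
    (μ : Λ → Measure (EuclideanSpace ℝ (Fin d)))
    (hμ : ∀ k, IsProbabilityMeasure (μ k))
    (h α : ℝ) (hh : h ∈ Set.Ioo (0:ℝ) 1) (hα : α ∈ Set.Ioo (0:ℝ) 2)
    (φ : EuclideanSpace ℝ (Fin d) → ℝ) (Mφ Cφ : ℝ)
    (hφb : ∀ x, |φ x| ≤ Mφ)
    (hφlip : ∀ x y, |φ x - φ y| ≤ Cφ * ‖x - y‖)
    (u : ℝ → EuclideanSpace ℝ (Fin d) → ℝ)
    (hu0 : ∀ t, 0 ≤ t → t < h → ∀ x, u t x = φ x)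
    (hurec : ∀ t, h ≤ t → ∀ x,
      u t x = ⨆ k, ∫ z, u (t - h) (x + h ^ (1/α) • z) ∂(μ k))
    (ζ : ℝ × EuclideanSpace ℝ (Fin d) → ℝ)
    (hζsmooth : ContDiff ℝ (⊤ : ℕ∞) ζ)
    (hζnonneg : ∀ q, 0 ≤ ζ q)
    (hζint : ∫ q : ℝ × EuclideanSpace ℝ (Fin d), ζ q = 1)
    (hζsupp : Function.support ζ ⊆
      Set.Icc (-1:ℝ) 0 ×ˢ Metric.closedBall (0 : EuclideanSpace ℝ (Fin d)) 1)
    (ε p : ℝ) (hε : ε ∈ Set.Ioo (0:ℝ) 1) (hp : 1 < p)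
    (uε : ℝ → EuclideanSpace ℝ (Fin d) → ℝ)
    (huε : ∀ t x, uε t x = ∫ (τ : ℝ), ∫ (e : EuclideanSpace ℝ (Fin d)),
      u (t - τ) (x - e) * (ε ^ (-(p + (d:ℝ))) * ζ (τ / ε ^ p, ε⁻¹ • e))) :
    ∀ t, h ≤ t → ∀ x,
      (⨆ k, ∫ z, uε (t - h) (x + h ^ (1/α) • z) ∂(μ k)) ≤ uε t x := by
  obtain ⟨h0, h1⟩ := hh
  obtain ⟨ε0, ε1⟩ := hε
  set c := h ^ (1/α) with hc
  set v := vseq μ c φ with hv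
  have hvp := vseq_prop μ hμ c φ Mφ Cφ hφb hφlip
  have hvb : ∀ n x, |v n x| ≤ Mφ := fun n => (hvp n).1
  have hvc : ∀ n, Continuous (v n) := fun n => lip_cont _ _ (hvp n).2
  let U : ℝ × EuclideanSpace ℝ (Fin d) → ℝ := fun q => v ⌊q.1 / h⌋₊ q.2
  have hUm : Measurable U := by
    have m1 : Measurable (fun q : ℕ × EuclideanSpace ℝ (Fin d) => v q.1 q.2) :=
      measurable_from_prod_countable_right fun n => (hvc n).measurable
    have m2 : Measurable (fun q : ℝ × EuclideanSpace ℝ (Fin d) => (⌊q.1 / h⌋₊, q.2)) := by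
      fun_prop
    exact m1.comp m2
  have hUb : ∀ q, |U q| ≤ Mφ := fun q => hvb _ _
  have hUrec : ∀ t, h ≤ t → ∀ x, U (t, x) = ⨆ k, ∫ z, U (t - h, x + c • z) ∂(μ k) := by
    intro t ht x
    have e : ⌊t / h⌋₊ = ⌊(t - h) / h⌋₊ + 1 := by
      rw [← Nat.floor_add_one (div_nonneg (by linarith) h0.le)]
      congr 1
      field_simp
      ring
    simp only [U, e]
    rfl
  have huU : ∀ n : ℕ, ∀ t, 0 ≤ t → t < (n + 1) * h → ∀ x, u t x = U (t, x) := by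
    intro n
    induction n with
    | zero =>
      intro t t0 t1 x
      have t1 : t < h := by simpa using t1
      rw [hu0 t t0 t1]
      have : ⌊t / h⌋₊ = 0 := Nat.floor_eq_zero.2 ((div_lt_one h0).2 t1)
      simp only [U, this]
      rfl
    | succ n ih =>
      intro t t0 t1 x
      rcases lt_or_ge t h with ht | ht
      · exact ih t t0 (by have : 0 ≤ (n:ℝ) * h := by positivity
                          linarith) x
      · rw [hurec t ht, hUrec t ht]
        congr 1
        ext k
        congr 1
        ext z
        exact ih _ (by linarith) (by push_cast at t1; linarith) _
  have huU : ∀ t, 0 ≤ t → ∀ x, u t x = U (t, x) := by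
    intro t t0 x
    obtain ⟨n, hn⟩ := exists_nat_gt (t / h)
    rw [div_lt_iff₀ h0] at hn
    exact huU n t t0 (by linarith) x
  let K : ℝ × EuclideanSpace ℝ (Fin d) → ℝ :=
    fun q => ε ^ (-(p + (d:ℝ))) * ζ (q.1 / ε ^ p, ε⁻¹ • q.2)
  have hεp : 0 < ε ^ p := Real.rpow_pos_of_pos ε0 p
  have hK0 : ∀ q, 0 ≤ K q := fun q =>
    mul_nonneg (Real.rpow_nonneg ε0.le _) (hζnonneg _)
  have hKs : ∀ q, K q ≠ 0 → q.1 ∈ Icc (-ε ^ p) 0 ∧ q.2 ∈ Metric.closedBall 0 ε := by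
    intro q hq
    have h1 : ζ (q.1 / ε ^ p, ε⁻¹ • q.2) ≠ 0 := right_ne_zero_of_mul hq
    obtain ⟨⟨a, b⟩, e⟩ := hζsupp h1
    simp only at a b e
    rw [le_div_iff₀ hεp] at a
    rw [div_le_iff₀ hεp] at b
    rw [mem_closedBall_zero_iff, norm_smul, norm_inv, Real.norm_of_nonneg ε0.le,
      inv_mul_le_iff₀ ε0] at e
    refine ⟨⟨by linarith, by linarith⟩, ?_⟩
    rw [mem_closedBall_zero_iff]
    linarith
  have hKc : Continuous K := by
    have := hζsmooth.continuous
    exact continuous_const.mul (this.comp (by fun_prop))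
  have hKcs : HasCompactSupport K := by
    refine HasCompactSupport.intro
      ((isCompact_Icc (a := -ε ^ p) (b := 0)).prod
        (isCompact_closedBall (0 : EuclideanSpace ℝ (Fin d)) ε)) ?_
    intro q hq
    by_contra hne
    exact hq (hKs q hne)
  have hKi : Integrable K (volume.prod volume) := by
    have := hKc.integrable_of_hasCompactSupport hKcs (μ := volume)
    rwa [Measure.volume_eq_prod] at this
  have hUKi : ∀ t x, Integrable (fun q : ℝ × EuclideanSpace ℝ (Fin d) =>
      U (t - q.1, x - q.2) * K q) (volume.prod volume) := by
    intro t x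
    refine hKi.bdd_mul (c := Mφ) ?_ (Filter.Eventually.of_forall fun q => hUb _)
    exact (hUm.comp (by fun_prop)).aestronglyMeasurable
  have huεU : ∀ t, 0 ≤ t → ∀ x, uε t x =
      ∫ q, U (t - q.1, x - q.2) * K q ∂(volume.prod volume) := by
    intro t t0 x
    rw [huε, integral_prod _ (hUKi t x)]
    congr 1
    ext τ
    congr 1
    ext e
    change u (t - τ) (x - e) * K (τ, e) = U (t - τ, x - e) * K (τ, e)
    by_cases hz : K (τ, e) = 0
    · rw [hz]; simp
    · have := (hKs _ hz).1.2
      simp only at this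
      rw [huU _ (by linarith)]
  intro t ht x
  apply ciSup_le
  intro k
  have := hμ k
  have hbig : Integrable (fun w : EuclideanSpace ℝ (Fin d) × (ℝ × EuclideanSpace ℝ (Fin d)) =>
      U (t - h - w.2.1, x + c • w.1 - w.2.2) * K w.2) ((μ k).prod (volume.prod volume)) := by
    have : Integrable (fun w : EuclideanSpace ℝ (Fin d) × (ℝ × EuclideanSpace ℝ (Fin d)) =>
      K w.2) ((μ k).prod (volume.prod volume)) := hKi.comp_snd (μ k)
    refine this.bdd_mul (c := Mφ) ?_ (Filter.Eventually.of_forall fun q => hUb _)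
    exact (hUm.comp (by fun_prop)).aestronglyMeasurable
  have e1 : ∫ z, uε (t - h) (x + c • z) ∂(μ k) =
      ∫ q, ∫ z, U (t - h - q.1, x + c • z - q.2) * K q ∂(μ k) ∂(volume.prod volume) := by
    simp_rw [huεU (t - h) (by linarith)]
    exact integral_integral_swap hbig
  rw [e1, huεU t (by linarith)]
  refine integral_mono hbig.integral_prod_right (hUKi t x) ?_
  intro q
  simp only
  rw [integral_mul_const]
  by_cases hz : K q = 0
  · rw [hz]; simp
  · have hq := (hKs _ hz).1.2
    refine mul_le_mul_of_nonneg_right ?_ (hK0 q)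
    rw [hUrec _ (by linarith)]
    have hle := le_ciSup (bdd_int μ hμ (fun z => U (t - q.1 - h, x - q.2 + c • z)) Mφ
      (fun z => hUb _)) k
    refine le_trans (le_of_eq ?_) hle
    congr 1
    ext z
    congr 2
    · ring
    · abel
end

section
/- Let α ∈ (1,2). Assume: (C1) each μ_k has a finite first moment and ∫_ℝ z dμ_k(z) = 0; (C2) there exist q₀ > 0 and C_β > 0 such that for every k = (k₁,k₂) ∈ Λ and every real r ≥ 1 the six quantities |β_{1,k}(−r^{1/α})|, |β_{2,k}(r^{1/α})|, ∫_{−∞}^{−1} |β_{1,k}(r^{1/α} x)| |x|^{−α} dx, ∫_1^∞ |β_{2,k}(r^{1/α} x)| x^{−α} dx, ∫_{−1}^0 |β_{1,k}(r^{1/α} x)| / |x|^{α−1} dx, and ∫_0^1 |β_{2,k}(r^{1/α} x)| / x^{α−1} dx are all ≤ C_β r^{−q₀}; and in addition sup_{k∈Λ} of each of |β_{1,k}(−1)|, |β_{2,k}(1)|, ∫_0^1 |α β_{1,k}(−λ) + β′_{1,k}(−λ) λ| λ^{1−α} dλ, and ∫_0^1 |α β_{2,k}(λ) − β′_{2,k}(λ)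 λ| λ^{1−α} dλ is ≤ C_β. Then for every three times continuously differentiable φ : ℝ → ℝ with φ, φ′, φ″, φ‴ bounded, every s ∈ (0,1] and every x ∈ ℝ, (1/s) · | sup_{k∈Λ} ∫_ℝ φ(x + s^{1/α} z) dμ_k(z) − φ(x) − s · sup_{(k₁,k₂)∈Λ} ( k₁ ∫_{−∞}^0 δ_λφ(x) |λ|^{−1−α} dλ + k₂ ∫_0^∞ δ_λφ(x) λ^{−1−α} dλ ) | ≤ (16 C_β ‖φ′‖_∞ + 2 C_β ‖φ″‖_∞) s^{q₀} + 4 C_β ‖φ″‖_∞ s^{(2−α)/α}, where δ_λφ(x) := φ(x+λ) − φ(x) − φ′(x) λ. -/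
open MeasureTheory Set Filter

lemma fub (ρ : Measure ℝ) [SFinite ρ] (g T G : ℝ → ℝ) (hg : Continuous g)
    (hG : ∀ z, G z = ∫ l in (0:ℝ)..z, g l)
    (hfin : ∀ l > (0:ℝ), ρ (Ioi l) ≠ ⊤)
    (hT : ∀ l > (0:ℝ), ρ.real (Ioi l) = T l)
    (hint : IntegrableOn (fun l => g l * T l) (Ioi 0)) :
    ∫ z in Ioi 0, G z ∂ρ = ∫ l in Ioi (0:ℝ), g l * T l := by
  let S : Set (ℝ × ℝ) := {p | p.1 < p.2}
  have hS : MeasurableSet S := measurableSet_lt measurable_fst measurable_snd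
  let f : ℝ × ℝ → ℝ := S.indicator (fun p => g p.1)
  have hfm : Measurable f := (hg.measurable.comp measurable_fst).indicator hS
  have e1 : ∀ l, (fun z => f (l, z)) = (Ioi l).indicator (fun _ => g l) := by
    intro l; ext z; simp [f, S, Set.indicator]
  have e2 : ∀ z, (fun l => f (l, z)) = (Iio z).indicator g := by
    intro z; ext l; simp [f, S, Set.indicator]
  have hr : ∀ l > (0:ℝ), (ρ.restrict (Ioi 0)) (Ioi l) = ρ (Ioi l) := by
    intro l hl
    rw [Measure.restrict_apply measurableSet_Ioi, inter_eq_left.2 (Ioi_subset_Ioi hl.le)]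
  have hr' : ∀ l > (0:ℝ), (ρ.restrict (Ioi 0)).real (Ioi l) = T l := by
    intro l hl
    rw [← hT l hl, measureReal_def, measureReal_def, hr l hl]
  have hI : Integrable f ((volume.restrict (Ioi (0:ℝ))).prod (ρ.restrict (Ioi 0))) := by
    rw [integrable_prod_iff hfm.aestronglyMeasurable]
    constructor
    · filter_upwards [ae_restrict_mem measurableSet_Ioi] with l hl
      rw [e1 l, integrable_indicator_iff measurableSet_Ioi]
      refine integrableOn_const ?_
      rw [hr l hl]; exact hfin l hl
    · refine (hint.norm).congr ?_
      filter_upwards [ae_restrict_mem measurableSet_Ioi] with l hl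
      have : (fun z => ‖f (l, z)‖) = (Ioi l).indicator (fun _ => ‖g l‖) := by
        ext z; rw [congrFun (e1 l) z, norm_indicator_eq_indicator_norm]
      rw [this, integral_indicator measurableSet_Ioi, setIntegral_const, hr' l hl]
      have : 0 ≤ T l := by rw [← hT l hl]; exact measureReal_nonneg
      simp [abs_of_nonneg this, mul_comm]
  have hsw := integral_integral_swap (f := fun l z => f (l, z)) hI
  calc ∫ z in Ioi 0, G z ∂ρ = ∫ z in Ioi 0, (∫ l in Ioi (0:ℝ), f (l, z)) ∂ρ := by
        refine setIntegral_congr_fun measurableSet_Ioi fun z hz => ?_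
        have hz' : (0:ℝ) < z := hz
        rw [e2 z, setIntegral_indicator measurableSet_Iio, hG z, intervalIntegral.integral_of_le hz'.le,
          Ioi_inter_Iio, integral_Ioc_eq_integral_Ioo]
    _ = ∫ l in Ioi (0:ℝ), (∫ z in Ioi 0, f (l, z) ∂ρ) := hsw.symm
    _ = _ := by
        refine setIntegral_congr_fun measurableSet_Ioi fun l hl => ?_
        rw [e1 l, integral_indicator measurableSet_Ioi, setIntegral_const, hr' l hl]
        simp [mul_comm]

lemma core (ν : Measure ℝ) [IsFiniteMeasure ν] (α K s h C A D : ℝ) (b g G : ℝ → ℝ)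
    (hα : 1 < α) (hα2 : α < 2) (hh : 0 < h) (hs : s = h ^ α)
    (hb : ContinuousOn b (Ici 0)) (hblim : Tendsto b atTop (nhds 0))
    (hν : ∀ x > (0:ℝ), (ν (Ioi x)).toReal = (K / α + b x) * x ^ (-α))
    (hg : Continuous g) (hG : ∀ z, G z = ∫ l in (0:ℝ)..z, g l)
    (hA : ∀ l, |g l| ≤ A) (hD : ∀ l ≥ 0, |g l| ≤ D * l)
    (h1 : (∫ x in Ici (1:ℝ), |b (h⁻¹ * x)| * x ^ (-α)) ≤ C)
    (h2 : (∫ x in Ioo (0:ℝ) 1, |b (h⁻¹ * x)| / x ^ (α - 1)) ≤ C) :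
    |(∫ z in Ioi 0, G (h * z) ∂ν) - s * (K * ∫ l in Ioi (0:ℝ), G l * l ^ (-1 - α))| ≤
      s * (A * C + D * C) := by
  have hA0 : 0 ≤ A := (abs_nonneg _).trans (hA 0)
  have hD0 : 0 ≤ D := by have := (abs_nonneg _).trans (hD 1 zero_le_one); simpa using this
  have hs0 : 0 < s := hs ▸ Real.rpow_pos_of_pos hh α
  have hpw : ContinuousOn (fun x : ℝ => x ^ (-α)) (Ioi 0) :=
    fun x hx => (Real.continuousAt_rpow_const x _ (Or.inl (ne_of_gt hx))).continuousWithinAt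
  have hi1 : IntegrableOn (fun x : ℝ => x ^ (-α)) (Ici 1) := by
    rw [integrableOn_Ici_iff_integrableOn_Ioi]
    exact integrableOn_Ioi_rpow_of_lt (by linarith) zero_lt_one
  have hi2 : IntegrableOn (fun x : ℝ => x ^ (1 - α)) (Ioo 0 1) := by
    rw [← integrableOn_Ioc_iff_integrableOn_Ioo, ← intervalIntegrable_iff_integrableOn_Ioc_of_le zero_le_one]
    exact intervalIntegral.intervalIntegrable_rpow' (by linarith)
  have hmul : ∀ x : ℝ, 0 < x → x * x ^ (-α) = x ^ (1 - α) := by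
    intro x hx
    rw [sub_eq_add_neg, Real.rpow_add hx, Real.rpow_one]
  have hun : Ioi (0:ℝ) = Ioo 0 1 ∪ Ici 1 := (Ioo_union_Ici_eq_Ioi zero_lt_one).symm
  have hi3 : IntegrableOn (fun l => g l * l ^ (-α)) (Ioi 0) := by
    rw [hun]
    refine IntegrableOn.union ?_ ?_
    · refine Integrable.mono' (hi2.const_mul D) ?_ ?_
      · exact ((hg.continuousOn.mul hpw).mono (fun x hx => hx.1)).aestronglyMeasurable measurableSet_Ioo
      · filter_upwards [ae_restrict_mem measurableSet_Ioo] with l hl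
        rw [norm_mul, Real.norm_eq_abs, Real.norm_of_nonneg (Real.rpow_nonneg hl.1.le _), ← hmul l hl.1,
          ← mul_assoc]
        exact mul_le_mul_of_nonneg_right (hD l hl.1.le) (Real.rpow_nonneg hl.1.le _)
    · refine Integrable.mono' (hi1.const_mul A) ?_ ?_
      · exact ((hg.continuousOn.mul hpw).mono (Ici_subset_Ioi.2 one_pos)).aestronglyMeasurable measurableSet_Ici
      · filter_upwards [ae_restrict_mem measurableSet_Ici] with l hl
        have hl0 : (0:ℝ) ≤ l := zero_le_one.trans hl
        rw [norm_mul, Real.norm_eq_abs, Real.norm_of_nonneg (Real.rpow_nonneg hl0 _)]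
        exact mul_le_mul_of_nonneg_right (hA l) (Real.rpow_nonneg hl0 _)
  -- boundedness of b
  obtain ⟨B, hB⟩ : ∃ B, ∀ x ≥ (0:ℝ), |b x| ≤ B := by
    obtain ⟨N, hN⟩ := eventually_atTop.1 (hblim.abs.eventually (gt_mem_nhds (show |(0:ℝ)| < 1 by simp)))
    obtain ⟨B, hB⟩ := (isCompact_Icc (a := (0:ℝ)) (b := N)).exists_bound_of_continuousOn
      (hb.mono Icc_subset_Ici_self)
    refine ⟨max B 1, fun x hx => ?_⟩
    rcases le_total x N with h | h
    · exact (hB x ⟨hx, h⟩).trans (le_max_left _ _)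
    · exact (hN x h).le.trans (le_max_right _ _)
  have hbc : ContinuousOn (fun l => b (h⁻¹ * l)) (Ici 0) :=
    hb.comp (by fun_prop) (fun x hx => mul_nonneg (inv_nonneg.2 hh.le) hx)
  have hB' : ∀ x ≥ (0:ℝ), |b (h⁻¹ * x)| ≤ B := fun x hx => hB _ (mul_nonneg (inv_nonneg.2 hh.le) hx)
  have hi4 : IntegrableOn (fun l => b (h⁻¹ * l) * (g l * l ^ (-α))) (Ioi 0) := by
    refine Integrable.bdd_mul (c := B) hi3 ?_ ?_
    · exact (hbc.mono Ioi_subset_Ici_self).aestronglyMeasurable measurableSet_Ioi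
    · filter_upwards [ae_restrict_mem measurableSet_Ioi] with l hl
      exact hB' l (le_of_lt hl)
  -- Levy part
  have hL : ∫ l in Ioi (0:ℝ), G l * l ^ (-1 - α) = ∫ l in Ioi (0:ℝ), g l * (l ^ (-α) / α) := by
    let d : ℝ → NNReal := fun l => (l ^ (-1 - α)).toNNReal
    have hd : Measurable d := by fun_prop
    let ρ : Measure ℝ := (volume.restrict (Ioi (0:ℝ))).withDensity (fun l => (d l : ENNReal))
    have hρ : ∀ l > (0:ℝ), ρ (Ioi l) = ENNReal.ofReal (l ^ (-α) / α) := by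
      intro l hl
      have hl' : (0:ℝ) < l := hl
      rw [withDensity_apply _ measurableSet_Ioi, Measure.restrict_restrict measurableSet_Ioi,
        inter_eq_left.2 (Ioi_subset_Ioi hl'.le)]
      change ∫⁻ a in Ioi l, ENNReal.ofReal (a ^ (-1 - α)) = _
      rw [← ofReal_integral_eq_lintegral_ofReal, integral_Ioi_rpow_of_lt (by linarith) hl']
      · congr 1
        rw [show -1 - α + 1 = -α by ring, neg_div_neg_eq]
      · exact integrableOn_Ioi_rpow_of_lt (by linarith) hl'
      · filter_upwards [ae_restrict_mem measurableSet_Ioi] with a ha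
        exact Real.rpow_nonneg (hl'.trans ha).le _
    have := fub ρ g (fun l => l ^ (-α) / α) G hg hG (fun l hl => by rw [hρ l hl]; exact ENNReal.ofReal_ne_top)
      (fun l hl => by
        rw [measureReal_def, hρ l hl, ENNReal.toReal_ofReal]
        exact div_nonneg (Real.rpow_nonneg (le_of_lt hl) _) (by linarith))
      (by
        have := hi3.div_const α
        refine Integrable.congr this ?_
        filter_upwards with l
        ring)
    rw [← this]
    rw [setIntegral_withDensity_eq_setIntegral_smul hd _ measurableSet_Ioi]
    rw [Measure.restrict_restrict measurableSet_Ioi, inter_self]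
    refine setIntegral_congr_fun measurableSet_Ioi fun l hl => ?_
    simp only [d, NNReal.smul_def, smul_eq_mul]
    rw [Real.coe_toNNReal _ (Real.rpow_nonneg (le_of_lt hl) _), mul_comm]
  have hM : ∫ z in Ioi 0, G (h * z) ∂ν =
      ∫ l in Ioi (0:ℝ), g l * (s * ((K / α + b (h⁻¹ * l)) * l ^ (-α))) := by
    have hm : Measurable (fun z : ℝ => h * z) := by fun_prop
    have hpre : ∀ l, (fun z : ℝ => h * z) ⁻¹' (Ioi l) = Ioi (h⁻¹ * l) := by
      intro l; ext z; simp only [mem_preimage, mem_Ioi]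
      rw [inv_mul_lt_iff₀ hh]
    rw [← fub (ν.map (fun z => h * z)) g (fun l => s * ((K / α + b (h⁻¹ * l)) * l ^ (-α))) G hg hG]
    · have hGm : Continuous G := by
        have : G = fun z => ∫ l in (0:ℝ)..z, g l := funext hG
        rw [this]
        exact intervalIntegral.continuous_primitive (fun a b => hg.intervalIntegrable a b) 0
      rw [setIntegral_map measurableSet_Ioi hGm.aestronglyMeasurable hm.aemeasurable, hpre]
      simp
    · intro l hl; exact measure_ne_top _ _
    · intro l hl
      have hl' : (0:ℝ) < l := hl
      rw [measureReal_def, Measure.map_apply hm measurableSet_Ioi, hpre,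
        hν _ (mul_pos (inv_pos.2 hh) hl'), Real.mul_rpow (inv_pos.2 hh).le hl'.le,
        Real.inv_rpow hh.le, ← Real.rpow_neg hh.le, neg_neg, ← hs]
      ring
    · have := (hi3.const_mul (s * (K / α))).add (hi4.const_mul s)
      refine Integrable.congr this ?_
      filter_upwards with l
      simp only [Pi.add_apply]
      ring
  have hdiff : (∫ z in Ioi 0, G (h * z) ∂ν) - s * (K * ∫ l in Ioi (0:ℝ), G l * l ^ (-1 - α)) =
      s * ∫ l in Ioi (0:ℝ), b (h⁻¹ * l) * (g l * l ^ (-α)) := by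
    rw [hM, hL, ← integral_const_mul, ← integral_const_mul, ← integral_const_mul, ← integral_sub]
    · refine integral_congr_ae ?_
      filter_upwards with l
      ring
    · have := (hi3.const_mul (s * (K / α))).add (hi4.const_mul s)
      refine Integrable.congr this ?_
      filter_upwards with l
      simp only [Pi.add_apply]
      ring
    · have := (hi3.const_mul (s * (K / α)))
      refine Integrable.congr this ?_
      filter_upwards with l
      ring
  rw [hdiff, abs_mul, abs_of_pos hs0]
  refine mul_le_mul_of_nonneg_left ?_ hs0.le
  have hdis : Disjoint (Ioo (0:ℝ) 1) (Ici 1) := by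
    rw [Set.disjoint_left]; intro x hx hx'; exact absurd hx.2 (not_lt.2 hx')
  rw [hun] at hi4 ⊢
  rw [setIntegral_union hdis measurableSet_Ici hi4.left_of_union hi4.right_of_union]
  have i1 : IntegrableOn (fun x => |b (h⁻¹ * x)| * x ^ (-α)) (Ici 1) := by
    refine Integrable.bdd_mul (c := B) hi1 ?_ ?_
    · exact (hbc.abs.mono (Ici_subset_Ici.2 zero_le_one)).aestronglyMeasurable measurableSet_Ici
    · filter_upwards [ae_restrict_mem measurableSet_Ici] with l hl
      rw [Real.norm_eq_abs, abs_abs]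
      exact hB' l (zero_le_one.trans hl)
  have i2 : IntegrableOn (fun x => |b (h⁻¹ * x)| / x ^ (α - 1)) (Ioo 0 1) := by
    have : IntegrableOn (fun x => |b (h⁻¹ * x)| * x ^ (1 - α)) (Ioo 0 1) := by
      refine Integrable.bdd_mul (c := B) hi2 ?_ ?_
      · exact (hbc.abs.mono (fun x hx => hx.1.le)).aestronglyMeasurable measurableSet_Ioo
      · filter_upwards [ae_restrict_mem measurableSet_Ioo] with l hl
        rw [Real.norm_eq_abs, abs_abs]
        exact hB' l hl.1.le
    refine this.congr_fun (fun x hx => ?_) measurableSet_Ioo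
    simp only []
    rw [div_eq_mul_inv, ← Real.rpow_neg hx.1.le, neg_sub]
  have b1 : |∫ l in Ici (1:ℝ), b (h⁻¹ * l) * (g l * l ^ (-α))| ≤ A * C := by
    refine le_trans ?_ (mul_le_mul_of_nonneg_left h1 hA0)
    rw [← integral_const_mul, ← Real.norm_eq_abs]
    refine norm_integral_le_of_norm_le (i1.const_mul A) ?_
    filter_upwards [ae_restrict_mem measurableSet_Ici] with l hl
    have hl0 : (0:ℝ) ≤ l := zero_le_one.trans hl
    rw [norm_mul, norm_mul, Real.norm_eq_abs, Real.norm_eq_abs, Real.norm_of_nonneg (Real.rpow_nonneg hl0 _)]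
    have := mul_le_mul_of_nonneg_right (hA l) (mul_nonneg (abs_nonneg (b (h⁻¹ * l))) (Real.rpow_nonneg hl0 (-α)))
    linarith
  have b2 : |∫ l in Ioo (0:ℝ) 1, b (h⁻¹ * l) * (g l * l ^ (-α))| ≤ D * C := by
    refine le_trans ?_ (mul_le_mul_of_nonneg_left h2 hD0)
    rw [← integral_const_mul, ← Real.norm_eq_abs]
    refine norm_integral_le_of_norm_le (i2.const_mul D) ?_
    filter_upwards [ae_restrict_mem measurableSet_Ioo] with l hl
    have hl0 : (0:ℝ) ≤ l := hl.1.le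
    rw [norm_mul, norm_mul, Real.norm_eq_abs, Real.norm_eq_abs, Real.norm_of_nonneg (Real.rpow_nonneg hl0 _)]
    have := mul_le_mul_of_nonneg_right (hD l hl0) (mul_nonneg (abs_nonneg (b (h⁻¹ * l))) (Real.rpow_nonneg hl0 (-α)))
    rw [div_eq_mul_inv, ← Real.rpow_neg hl0, neg_sub, ← hmul l hl.1]
    linarith
  exact (abs_add_le _ _).trans (by linarith)

lemma ici_ioi (ρ : Measure ℝ) [IsFiniteMeasure ρ] (T : ℝ → ℝ)
    (hT : ∀ x > (0:ℝ), (ρ (Ici x)).toReal = T x) (hc : ∀ x > (0:ℝ), ContinuousAt T x) :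
    ∀ x > (0:ℝ), (ρ (Ioi x)).toReal = T x := by
  intro x hx
  apply le_antisymm
  · rw [← hT x hx]
    exact ENNReal.toReal_mono (measure_ne_top _ _) (measure_mono Ioi_subset_Ici_self)
  · have h1 : Tendsto T (nhdsWithin x (Ioi x)) (nhds (T x)) := (hc x hx).tendsto.mono_left nhdsWithin_le_nhds
    refine le_of_tendsto h1 ?_
    filter_upwards [self_mem_nhdsWithin] with y hy
    rw [← hT y (lt_trans hx hy)]
    exact ENNReal.toReal_mono (measure_ne_top _ _) (measure_mono (Ici_subset_Ioi.2 hy))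

lemma sup_diff {ι : Type*} [Nonempty ι] (a b : ι → ℝ) (M C c s : ℝ) (hs : 0 < s) (ha : ∀ i, |a i| ≤ M)
    (h : ∀ i, |a i - c - s * b i| ≤ C) : |(⨆ i, a i) - c - s * (⨆ i, b i)| ≤ C := by
  have hba : BddAbove (range a) := ⟨M, by rintro _ ⟨i, rfl⟩; exact (abs_le.1 (ha i)).2⟩
  have hbb : BddAbove (range b) := by
    refine ⟨(M - c + C) / s, ?_⟩
    rintro _ ⟨i, rfl⟩
    rw [le_div_iff₀ hs]
    have h1 := (abs_le.1 (h i)).1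
    have h2 := (abs_le.1 (ha i)).2
    linarith
  rw [abs_le]
  constructor
  · have : (⨆ i, b i) ≤ ((⨆ i, a i) - c + C) / s := by
      refine ciSup_le fun i => ?_
      rw [le_div_iff₀ hs]
      have h1 := (abs_le.1 (h i)).1
      have h2 := le_ciSup hba i
      linarith
    rw [le_div_iff₀ hs] at this
    linarith
  · have : (⨆ i, a i) ≤ c + s * (⨆ i, b i) + C := by
      refine ciSup_le fun i => ?_
      have h1 := (abs_le.1 (h i)).2
      have h2 := mul_le_mul_of_nonneg_left (le_ciSup hbb i) hs.le
      linarith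
    linarith

/-- Consistency estimate (assumption (ii)) for the concrete family of
distributions in the case `α ∈ (1,2)`. -/
theorem stmt_7 (α : ℝ) (hα : α ∈ Set.Ioo (1:ℝ) 2)
    (Λl Λu : ℝ) (hΛl : 0 < Λl) (hΛ : Λl < Λu)
    (μ : {k : ℝ × ℝ // k ∈ Set.Ioo Λl Λu ×ˢ Set.Ioo Λl Λu} → Measure ℝ)
    (hμ : ∀ k, IsProbabilityMeasure (μ k))
    (β₁ β₂ β₁' β₂' : {k : ℝ × ℝ // k ∈ Set.Ioo Λl Λu ×ˢ Set.Ioo Λl Λu} → ℝ → ℝ)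
    (hβ₁d : ∀ k, ∀ x < (0:ℝ), HasDerivAt (β₁ k) (β₁' k x) x)
    (hβ₂d : ∀ k, ∀ x > (0:ℝ), HasDerivAt (β₂ k) (β₂' k x) x)
    (hβ₁c : ∀ k, ContinuousOn (β₁ k) (Set.Iic 0) ∧ ContinuousOn (β₁' k) (Set.Iio 0))
    (hβ₂c : ∀ k, ContinuousOn (β₂ k) (Set.Ici 0) ∧ ContinuousOn (β₂' k) (Set.Ioi 0))
    (hβ₁lim : ∀ k, Tendsto (β₁ k) atBot (nhds 0))
    (hβ₂lim : ∀ k, Tendsto (β₂ k) atTop (nhds 0))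
    (hcdf₁ : ∀ k, ∀ x < (0:ℝ),
      (μ k (Set.Iic x)).toReal = (k.1.1 / α + β₁ k x) * |x| ^ (-α))
    (hcdf₂ : ∀ k, ∀ x > (0:ℝ),
      (μ k (Set.Iic x)).toReal = 1 - (k.1.2 / α + β₂ k x) * x ^ (-α))
    -- assumption (C1): mean zero
    (hC1 : ∀ k, Integrable (fun z : ℝ => z) (μ k) ∧ (∫ z, z ∂(μ k)) = 0)
    (q₀ Cβ : ℝ) (hq₀ : 0 < q₀) (hCβ : 0 < Cβ)
    -- assumption (C2)
    (hC2 : ∀ k, ∀ r : ℝ, 1 ≤ r →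
      |β₁ k (-(r ^ (1/α)))| ≤ Cβ * r ^ (-q₀) ∧
      |β₂ k (r ^ (1/α))| ≤ Cβ * r ^ (-q₀) ∧
      (∫ x in Set.Iic (-1:ℝ), |β₁ k (r ^ (1/α) * x)| * |x| ^ (-α)) ≤ Cβ * r ^ (-q₀) ∧
      (∫ x in Set.Ici (1:ℝ), |β₂ k (r ^ (1/α) * x)| * x ^ (-α)) ≤ Cβ * r ^ (-q₀) ∧
      (∫ x in Set.Ioo (-1:ℝ) 0, |β₁ k (r ^ (1/α) * x)| / |x| ^ (α - 1)) ≤ Cβ * r ^ (-q₀) ∧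
      (∫ x in Set.Ioo (0:ℝ) 1, |β₂ k (r ^ (1/α) * x)| / x ^ (α - 1)) ≤ Cβ * r ^ (-q₀))
    -- uniform bounds
    (hC2' : ∀ k,
      |β₁ k (-1)| ≤ Cβ ∧ |β₂ k 1| ≤ Cβ ∧
      (∫ l in Set.Ioo (0:ℝ) 1, |α * β₁ k (-l) + β₁' k (-l) * l| * l ^ (1 - α)) ≤ Cβ ∧
      (∫ l in Set.Ioo (0:ℝ) 1, |α * β₂ k l - β₂' k l * l| * l ^ (1 - α)) ≤ Cβ) :
    ∀ φ : ℝ → ℝ, ContDiff ℝ 3 φ →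
      (∃ M, ∀ x, |φ x| ≤ M ∧ |deriv φ x| ≤ M ∧ |deriv (deriv φ) x| ≤ M ∧
        |deriv (deriv (deriv φ)) x| ≤ M) →
      ∀ s ∈ Set.Ioc (0:ℝ) 1, ∀ x : ℝ,
        (1 / s) *
          |(⨆ k, ∫ z, φ (x + s ^ (1/α) * z) ∂(μ k)) - φ x -
            s * (⨆ k : {k : ℝ × ℝ // k ∈ Set.Ioo Λl Λu ×ˢ Set.Ioo Λl Λu}, (k.1.1 * (∫ l in Set.Iio (0:ℝ),
                (φ (x + l) - φ x - deriv φ x * l) * |l| ^ (-1 - α)) +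
              k.1.2 * ∫ l in Set.Ioi (0:ℝ),
                (φ (x + l) - φ x - deriv φ x * l) * l ^ (-1 - α)))| ≤
        (16 * Cβ * (⨆ y, |deriv φ y|) + 2 * Cβ * (⨆ y, |deriv (deriv φ) y|)) * s ^ q₀ +
          4 * Cβ * (⨆ y, |deriv (deriv φ) y|) * s ^ ((2 - α) / α) := by
  intro φ hφ hM s hs x
  obtain ⟨M, hM⟩ := hM
  obtain ⟨hα1, hα2⟩ := hα
  have hα0 : 0 < α := by linarith
  obtain ⟨hs0, hs1⟩ := hs
  set A := ⨆ y, |deriv φ y| with hA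
  set D := ⨆ y, |deriv (deriv φ) y| with hD
  have hAle : ∀ y, |deriv φ y| ≤ A :=
    fun y => le_ciSup (f := fun y => |deriv φ y|) ⟨M, by rintro _ ⟨i, rfl⟩; exact (hM i).2.1⟩ y
  have hDle : ∀ y, |deriv (deriv φ) y| ≤ D :=
    fun y => le_ciSup (f := fun y => |deriv (deriv φ) y|) ⟨M, by rintro _ ⟨i, rfl⟩; exact (hM i).2.2.1⟩ y
  have hA0 : 0 ≤ A := (abs_nonneg _).trans (hAle 0)
  have hD0 : 0 ≤ D := (abs_nonneg _).trans (hDle 0)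
  have hφ1 : Differentiable ℝ φ := hφ.differentiable (by norm_num)
  have hφ' : ContDiff ℝ 2 (deriv φ) := hφ.deriv' (n := 2)
  have hφ2 : Differentiable ℝ (deriv φ) := hφ'.differentiable (by norm_num)
  have hc : Continuous (deriv φ) := hφ'.continuous
  set h := s ^ (1 / α) with hh
  have hh0 : 0 < h := Real.rpow_pos_of_pos hs0 _
  have hsh : s = h ^ α := by
    rw [hh, ← Real.rpow_mul hs0.le, one_div_mul_cancel hα0.ne', Real.rpow_one]
  have hr : (s⁻¹) ^ (1 / α) = h⁻¹ := by rw [Real.inv_rpow hs0.le]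
  have hr2 : (s⁻¹) ^ (-q₀) = s ^ q₀ := by rw [Real.inv_rpow hs0.le, Real.rpow_neg hs0.le, inv_inv]
  have hr1 : 1 ≤ s⁻¹ := (one_le_inv₀ hs0).2 hs1
  have hlip : ∀ l, |deriv φ (x + l) - deriv φ x| ≤ D * |l| := by
    intro l
    have := Convex.norm_image_sub_le_of_norm_deriv_le (f := deriv φ) (s := univ) (C := D)
      (fun y _ => hφ2 y) (fun y _ => hDle y) convex_univ (mem_univ x) (mem_univ (x + l))
    simpa using this
  have hbd : ∀ l, |deriv φ (x + l) - deriv φ x| ≤ 2 * A := by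
    intro l
    have := abs_sub (deriv φ (x + l)) (deriv φ x)
    linarith [hAle (x + l), hAle x]
  let G : ℝ → ℝ := fun l => φ (x + l) - φ x - deriv φ x * l
  have hGd : ∀ l, HasDerivAt G (deriv φ (x + l) - deriv φ x) l := by
    intro l
    have h1 : HasDerivAt (fun l => φ (x + l)) (deriv φ (x + l)) l :=
      HasDerivAt.comp_const_add x l (hφ1 (x + l)).hasDerivAt
    have h2 : HasDerivAt (fun l => deriv φ x * l) (deriv φ x) l := by
      simpa using (hasDerivAt_id l).const_mul (deriv φ x)
    exact (h1.sub_const _).sub h2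
  have hG0 : G 0 = 0 := by simp [G]
  have hgc : Continuous (fun l => deriv φ (x + l) - deriv φ x) := by fun_prop
  have hGi : ∀ z, G z = ∫ l in (0:ℝ)..z, (deriv φ (x + l) - deriv φ x) := by
    intro z
    rw [intervalIntegral.integral_eq_sub_of_hasDerivAt (fun l _ => hGd l) (hgc.intervalIntegrable _ _), hG0,
      sub_zero]
  have hGni : ∀ z, G (-z) = ∫ l in (0:ℝ)..z, -(deriv φ (x + -l) - deriv φ x) := by
    intro z
    rw [intervalIntegral.integral_eq_sub_of_hasDerivAt (f := fun l => G (-l))]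
    · simp [hG0]
    · intro l _
      have := (hGd (-l)).scomp l (hasDerivAt_neg l)
      simpa [Function.comp_def] using this
    · exact Continuous.intervalIntegrable (by fun_prop) _ _
  have hne : Nonempty {k : ℝ × ℝ // k ∈ Set.Ioo Λl Λu ×ˢ Set.Ioo Λl Λu} := by
    obtain ⟨m, hm⟩ := exists_between hΛ
    exact ⟨⟨(m, m), ⟨hm, hm⟩⟩⟩
  have hphi_int : ∀ k, Integrable (fun z => φ (x + h * z)) (μ k) := by
    intro k
    have := hμ k
    refine Integrable.of_bound (C := M) ?_ ?_
    · exact Continuous.aestronglyMeasurable (by have := hφ.continuous; fun_prop)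
    · exact Eventually.of_forall fun z => (hM _).1
  have key : ∀ k : {k : ℝ × ℝ // k ∈ Set.Ioo Λl Λu ×ˢ Set.Ioo Λl Λu},
      |(∫ z, φ (x + h * z) ∂(μ k)) - φ x - s * (k.1.1 * (∫ l in Set.Iio (0:ℝ),
                (φ (x + l) - φ x - deriv φ x * l) * |l| ^ (-1 - α)) +
              k.1.2 * ∫ l in Set.Ioi (0:ℝ),
                (φ (x + l) - φ x - deriv φ x * l) * l ^ (-1 - α))| ≤
        2 * (s * (2 * A * (Cβ * s ^ q₀) + D * (Cβ * s ^ q₀))) := by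
    intro k
    have := hμ k
    obtain ⟨-, -, c3, c4, c5, c6⟩ := hC2 k s⁻¹ hr1
    rw [hr, hr2] at c3 c4 c5 c6
    have hGint : Integrable (fun z => G (h * z)) (μ k) := by
      have h2 : Integrable (fun z : ℝ => deriv φ x * (h * z)) (μ k) :=
        ((hC1 k).1.const_mul h).const_mul _
      exact ((hphi_int k).sub (integrable_const (φ x))).sub h2
    have hE : (∫ z, φ (x + h * z) ∂(μ k)) - φ x = ∫ z, G (h * z) ∂(μ k) := by
      have h2 : Integrable (fun z : ℝ => deriv φ x * (h * z)) (μ k) :=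
        ((hC1 k).1.const_mul h).const_mul _
      have e1 : ∫ z, G (h * z) ∂(μ k) =
          (∫ z, (φ (x + h * z) - φ x) ∂(μ k)) - ∫ z, deriv φ x * (h * z) ∂(μ k) :=
        integral_sub ((hphi_int k).sub (integrable_const (φ x))) h2
      rw [e1, integral_sub (hphi_int k) (integrable_const (φ x)), integral_const_mul, integral_const_mul,
        (hC1 k).2]
      simp
    have hpos := core (μ k) α k.1.2 s h (Cβ * s ^ q₀) (2 * A) D (β₂ k)
      (fun l => deriv φ (x + l) - deriv φ x) G hα1 hα2 hh0 hsh (hβ₂c k).1 (hβ₂lim k)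
      (by
        intro y hy
        have := hcdf₂ k y hy
        have h3 := prob_compl_eq_one_sub (μ := μ k) (measurableSet_Iic (a := y))
        rw [compl_Iic] at h3
        rw [h3, ENNReal.toReal_sub_of_le prob_le_one ENNReal.one_ne_top, this]
        simp)
      hgc hGi hbd (fun l hl => by simpa [abs_of_nonneg hl] using hlip l) c4 c6
    have hmn : Measurable (fun z : ℝ => -z) := measurable_neg
    have hfin : IsFiniteMeasure ((μ k).map (fun z => -z)) := by infer_instance
    have hneg := core ((μ k).map (fun z => -z)) α k.1.1 s h (Cβ * s ^ q₀) (2 * A) D (fun l => β₁ k (-l))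
      (fun l => -(deriv φ (x + -l) - deriv φ x)) (fun l => G (-l)) hα1 hα2 hh0 hsh
      ((hβ₁c k).1.comp continuous_neg.continuousOn (fun z hz => by simpa using hz))
      ((hβ₁lim k).comp tendsto_neg_atTop_atBot)
      (by
        refine ici_ioi _ (fun y => (k.1.1 / α + β₁ k (-y)) * y ^ (-α)) ?_ ?_
        · intro y hy
          have hy' : (0:ℝ) < y := hy
          rw [Measure.map_apply hmn measurableSet_Ici]
          have : (fun z : ℝ => -z) ⁻¹' Ici y = Iic (-y) := by ext z; simp [le_neg]
          rw [this, hcdf₁ k (-y) (by linarith), abs_neg, abs_of_pos hy']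
        · intro y hy
          have hy' : (0:ℝ) < y := hy
          have h1 : ContinuousAt (fun y => β₁ k (-y)) y :=
            ContinuousAt.comp (f := fun y : ℝ => -y) (g := β₁ k)
              (hβ₁d k (-y) (by linarith)).continuousAt continuous_neg.continuousAt
          exact (continuousAt_const.add h1).mul (Real.continuousAt_rpow_const y _ (Or.inl hy'.ne')))
      (by fun_prop) hGni (fun l => by rw [abs_neg]; exact hbd _)
      (fun l hl => by rw [abs_neg]; simpa [abs_of_nonneg hl] using hlip (-l))
      (by
        refine le_of_eq_of_le ?_ c3
        rw [integral_Ici_eq_integral_Ioi, ← integral_comp_neg_Ioi]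
        refine setIntegral_congr_fun measurableSet_Ioi fun y hy => ?_
        have hy' : (0:ℝ) < y := lt_trans one_pos hy
        simp only [abs_neg, abs_of_pos hy', mul_neg])
      (by
        refine le_of_eq_of_le ?_ c5
        rw [← integral_Ioc_eq_integral_Ioo, ← integral_Ioc_eq_integral_Ioo,
          ← intervalIntegral.integral_of_le zero_le_one, ← intervalIntegral.integral_of_le (by norm_num)]
        have := intervalIntegral.integral_comp_neg (a := 0) (b := 1)
          (fun y => |β₁ k (h⁻¹ * y)| / |y| ^ (α - 1))
        rw [neg_zero] at this
        rw [← this]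
        refine intervalIntegral.integral_congr fun y hy => ?_
        rw [uIcc_of_le zero_le_one] at hy
        simp only [abs_neg, abs_of_nonneg hy.1, mul_neg])
    have hGc : Continuous G := by
      have := hφ.continuous
      fun_prop
    have e1 : ∫ z in Ioi (0:ℝ), G (-(h * z)) ∂((μ k).map (fun z => -z)) = ∫ z in Iic (0:ℝ), G (h * z) ∂(μ k) := by
      rw [setIntegral_map measurableSet_Ioi (Continuous.aestronglyMeasurable (by fun_prop)) hmn.aemeasurable]
      have : (fun z : ℝ => -z) ⁻¹' Ioi 0 = Iio 0 := by ext z; simp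
      rw [this]
      simp only [mul_neg, neg_neg]
      symm
      refine setIntegral_eq_of_subset_of_forall_diff_eq_zero measurableSet_Iic Iio_subset_Iic_self ?_
      intro z hz
      have : z = 0 := le_antisymm hz.1 (not_lt.1 hz.2)
      rw [this, mul_zero, hG0]
    have e2 : ∫ l in Ioi (0:ℝ), G (-l) * l ^ (-1 - α) = ∫ l in Iio (0:ℝ), G l * |l| ^ (-1 - α) := by
      rw [← integral_Iic_eq_integral_Iio]
      have := integral_comp_neg_Ioi 0 (fun l => G l * |l| ^ (-1 - α))
      rw [neg_zero] at this
      rw [← this]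
      refine setIntegral_congr_fun measurableSet_Ioi fun y hy => ?_
      have hy' : (0:ℝ) < y := hy
      simp only [abs_neg, abs_of_pos hy']
    have e3 : ∫ z, G (h * z) ∂(μ k) = (∫ z in Iic (0:ℝ), G (h * z) ∂(μ k)) + ∫ z in Ioi (0:ℝ), G (h * z) ∂(μ k) :=
      (intervalIntegral.integral_Iic_add_Ioi hGint.integrableOn hGint.integrableOn).symm
    rw [e1, e2] at hneg
    rw [hE, e3]
    change |_ - s * (k.1.1 * (∫ l in Iio (0:ℝ), G l * |l| ^ (-1 - α)) +
      k.1.2 * ∫ l in Ioi (0:ℝ), G l * l ^ (-1 - α))| ≤ _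
    have := abs_add_le _ _ |>.trans (add_le_add hneg hpos)
    refine le_trans (le_of_eq ?_) (this.trans (le_of_eq ?_))
    · congr 1; ring
    · ring
  have hfinal := sup_diff _ _ M _ (φ x) s hs0 (fun k => by
    have := hμ k
    have h1 := norm_integral_le_of_norm_le_const (μ := μ k) (f := fun z => φ (x + h * z)) (C := M)
      (Eventually.of_forall fun z => (hM _).1)
    simpa using h1) key
  have h5 := mul_le_mul_of_nonneg_left hfinal (one_div_pos.2 hs0).le
  refine h5.trans ?_
  have h6 : 1 / s * (2 * (s * (2 * A * (Cβ * s ^ q₀) + D * (Cβ * s ^ q₀)))) =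
      (4 * Cβ * A + 2 * Cβ * D) * s ^ q₀ := by
    field_simp
    ring
  rw [h6]
  have p1 : 0 ≤ Cβ * A * s ^ q₀ := by positivity
  have p2 : 0 ≤ 4 * Cβ * D * s ^ ((2 - α) / α) := by positivity
  linarith
end

section
/- Let α ∈ (1,2), s ∈ (0,1], and let φ : ℝ → ℝ be continuously differentiable with φ and φ′ bounded. Let β : (0,∞) → ℝ be a bounded continuously differentiable function with β(y) → 0 as y → ∞, such that ∫_1^∞ |β(s^{−1/α} λ)| λ^{−α} dλ < ∞ and the function λ ↦ (α β(s^{−1/α} λ) − β′(s^{−1/α} λ) s^{−1/α} λ) λ^{−α−1} δ_λφ(x) is Lebesgue integrable on (1,∞), where δ_λφ(x) := φ(x+λ) − φ(x) − φ′(x) λ. Then for every x ∈ ℝ, | ∫_1^∞ δ_λφ(x) (α β(s^{−1/α} λ) − β′(s^{−1/α} λ) s^{−1/α} λ) λ^{−α−1} dλ | ≤ 2 ‖φ′‖_∞ ( |β(s^{−1/α})| + ∫_1^∞ |β(s^{−1/α} λ)| λ^{−α} dλ ). -/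
open MeasureTheory Set Filter

/-- Estimate of the tail integral `I₁` in the case `α ∈ (1,2)`. -/
theorem stmt_8 (α s : ℝ) (hα : α ∈ Set.Ioo (1:ℝ) 2) (hs : s ∈ Set.Ioc (0:ℝ) 1)
    (φ : ℝ → ℝ) (hφ : ContDiff ℝ 1 φ)
    (hφb : ∃ M, ∀ x, |φ x| ≤ M) (hφ'b : ∃ M, ∀ x, |deriv φ x| ≤ M)
    (β β' : ℝ → ℝ)
    (hβd : ∀ y > (0:ℝ), HasDerivAt β (β' y) y)
    (hβ'c : ContinuousOn β' (Set.Ioi 0))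
    (hβb : ∃ M, ∀ y > (0:ℝ), |β y| ≤ M)
    (hβlim : Tendsto β atTop (nhds 0))
    (hint1 : IntegrableOn
      (fun l => |β (s ^ (-(1/α)) * l)| * l ^ (-α)) (Set.Ioi 1))
    (hint2 : ∀ x : ℝ, IntegrableOn
      (fun l => (φ (x + l) - φ x - deriv φ x * l) *
        (α * β (s ^ (-(1/α)) * l) - β' (s ^ (-(1/α)) * l) * s ^ (-(1/α)) * l) *
        l ^ (-α - 1)) (Set.Ioi 1)) :
    ∀ x : ℝ,
      |∫ l in Set.Ioi (1:ℝ),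
          (φ (x + l) - φ x - deriv φ x * l) *
            (α * β (s ^ (-(1/α)) * l) - β' (s ^ (-(1/α)) * l) * s ^ (-(1/α)) * l) *
            l ^ (-α - 1)| ≤
        2 * (⨆ y, |deriv φ y|) *
          (|β (s ^ (-(1/α)))| +
            ∫ l in Set.Ioi (1:ℝ), |β (s ^ (-(1/α)) * l)| * l ^ (-α)) := by
  intro x
  obtain ⟨hα1, hα2⟩ := hα
  have hc : 0 < s ^ (-(1/α)) := Real.rpow_pos_of_pos hs.1 _
  set c := s ^ (-(1/α)) with hcdef
  clear_value c
  set K := ⨆ y, |deriv φ y| with hK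
  have hbdd : BddAbove (Set.range fun y => |deriv φ y|) := by
    obtain ⟨M, hM⟩ := hφ'b
    exact ⟨M, by rintro _ ⟨y, rfl⟩; exact hM y⟩
  have hKle : ∀ y, |deriv φ y| ≤ K := fun y => le_ciSup hbdd y
  clear_value K
  have hK0 : 0 ≤ K := (abs_nonneg _).trans (hKle 0)
  have hφd : ∀ y, HasDerivAt φ (deriv φ y) y := fun y =>
    (hφ.differentiable (by norm_num) y).hasDerivAt
  have hφ'c : Continuous (deriv φ) := hφ.continuous_deriv (by norm_num)
  have hδd : ∀ l, HasDerivAt (fun l => φ (x + l) - φ x - deriv φ x * l)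
      (deriv φ (x + l) - deriv φ x) l := by
    intro l
    have h1 : HasDerivAt (fun l => φ (x + l)) (deriv φ (x + l)) l :=
      (hφd (x + l)).comp_const_add x l
    have h2 : HasDerivAt (fun l => deriv φ x * l) (deriv φ x) l := by
      simpa using (hasDerivAt_id l).const_mul (deriv φ x)
    exact (h1.sub_const (φ x)).sub h2
  have hδ'b : ∀ l, |deriv φ (x + l) - deriv φ x| ≤ 2 * K := by
    intro l
    have := abs_sub (deriv φ (x + l)) (deriv φ x)
    linarith [hKle (x + l), hKle x]
  have hδb : ∀ l, |φ (x + l) - φ x - deriv φ x * l| ≤ 2 * K * |l| := by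
    intro l
    have := convex_univ.norm_image_sub_le_of_norm_hasDerivWithin_le
      (f := fun l => φ (x + l) - φ x - deriv φ x * l) (x := 0) (y := l) (C := 2 * K)
      (fun l _ => (hδd l).hasDerivWithinAt) (fun l _ => hδ'b l) (mem_univ _) (mem_univ _)
    simpa using this
  have hGd : ∀ l > (0:ℝ), HasDerivAt (fun l => β (c * l) * l ^ (-α))
      (-((α * β (c * l) - β' (c * l) * c * l) * l ^ (-α - 1))) l := by
    intro l hl
    have h0 : HasDerivAt (fun l => c * l) c l := by
      simpa using (hasDerivAt_id l).const_mul c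
    have h1 : HasDerivAt (fun l => β (c * l)) (β' (c * l) * c) l :=
      (hβd (c * l) (mul_pos hc hl)).comp l h0
    have h2 := Real.hasDerivAt_rpow_const (x := l) (p := -α) (Or.inl hl.ne')
    refine (h1.mul h2).congr_deriv ?_
    have : l ^ (-α) = l * l ^ (-α - 1) := by
      rw [Real.rpow_sub_one hl.ne']; field_simp
    rw [this]; ring
  have hGc : ContinuousOn (fun l => β (c * l) * l ^ (-α)) (Set.Ioi 1) := fun l hl =>
    (hGd l (lt_trans one_pos hl)).continuousAt.continuousWithinAt
  have habs : ∀ l ∈ Set.Ioi (1:ℝ), |β (c * l) * l ^ (-α)| = |β (c * l)| * l ^ (-α) := by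
    intro l hl
    rw [abs_mul, abs_of_nonneg (Real.rpow_nonneg (lt_trans one_pos hl).le (-α))]
  have hbd : ∀ l ∈ Set.Ioi (1:ℝ), ‖(deriv φ (x + l) - deriv φ x) * (β (c * l) * l ^ (-α))‖
      ≤ 2 * K * (|β (c * l)| * l ^ (-α)) := by
    intro l hl
    rw [norm_mul, Real.norm_eq_abs, Real.norm_eq_abs, habs l hl]
    exact mul_le_mul_of_nonneg_right (hδ'b l)
      (mul_nonneg (abs_nonneg _) (Real.rpow_nonneg (lt_trans one_pos hl).le _))
  have hint3 : IntegrableOn (fun l => (deriv φ (x + l) - deriv φ x) * (β (c * l) * l ^ (-α)))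
      (Set.Ioi 1) := by
    refine Integrable.mono' (hint1.const_mul (2 * K)) ?_ ?_
    · refine ContinuousOn.aestronglyMeasurable ?_ measurableSet_Ioi
      refine ContinuousOn.mul ?_ hGc
      exact Continuous.continuousOn (by fun_prop)
    · exact (ae_restrict_iff' measurableSet_Ioi).2 (Eventually.of_forall hbd)
  have hlim : Tendsto (fun l => (φ (x + l) - φ x - deriv φ x * l) * (β (c * l) * l ^ (-α)))
      atTop (nhds 0) := by
    have h1 : Tendsto (fun l => β (c * l)) atTop (nhds 0) :=
      hβlim.comp (tendsto_id.const_mul_atTop hc)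
    have h2 : Tendsto (fun l => 2 * K * |β (c * l)|) atTop (nhds 0) := by
      simpa using h1.abs.const_mul (2 * K)
    refine squeeze_zero_norm' ?_ h2
    filter_upwards [eventually_gt_atTop (1:ℝ)] with l hl
    have hl0 : 0 < l := lt_trans one_pos hl
    rw [norm_mul, Real.norm_eq_abs, Real.norm_eq_abs, habs l hl]
    have h3 : l * l ^ (-α) ≤ 1 := by
      rw [← Real.rpow_one_add' hl0.le (by linarith)]
      exact Real.rpow_le_one_of_one_le_of_nonpos hl.le (by linarith)
    have h4 := hδb l
    rw [abs_of_pos hl0] at h4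
    calc _ ≤ 2 * K * l * (|β (c * l)| * l ^ (-α)) := mul_le_mul_of_nonneg_right h4
          (mul_nonneg (abs_nonneg _) (Real.rpow_nonneg hl0.le _))
      _ = 2 * K * |β (c * l)| * (l * l ^ (-α)) := by ring
      _ ≤ 2 * K * |β (c * l)| * 1 := mul_le_mul_of_nonneg_left h3 (by positivity)
      _ = _ := mul_one _
  have hI := hint2 x
  have hFTC := integral_Ioi_of_hasDerivAt_of_tendsto' (a := (1:ℝ)) (m := (0:ℝ))
    (f := fun l => (φ (x + l) - φ x - deriv φ x * l) * (β (c * l) * l ^ (-α)))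
    (f' := fun l => (deriv φ (x + l) - deriv φ x) * (β (c * l) * l ^ (-α)) -
      (φ (x + l) - φ x - deriv φ x * l) * (α * β (c * l) - β' (c * l) * c * l) * l ^ (-α - 1))
    (fun l hl => ((hδd l).mul (hGd l (lt_of_lt_of_le one_pos hl))).congr_deriv (by ring))
    (hint3.sub hI) hlim
  rw [integral_sub hint3 hI] at hFTC
  have hA : |∫ l in Set.Ioi (1:ℝ), (deriv φ (x + l) - deriv φ x) * (β (c * l) * l ^ (-α))|
      ≤ 2 * K * ∫ l in Set.Ioi (1:ℝ), |β (c * l)| * l ^ (-α) := by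
    rw [← integral_const_mul]
    exact norm_integral_le_of_norm_le (hint1.const_mul (2 * K))
      ((ae_restrict_iff' measurableSet_Ioi).2 (Eventually.of_forall hbd))
  have hB : |(φ (x + 1) - φ x - deriv φ x * 1) * (β (c * 1) * (1:ℝ) ^ (-α))|
      ≤ 2 * K * |β c| := by
    have := hδb 1
    rw [abs_one, mul_one (2 * K)] at this
    rw [abs_mul, Real.one_rpow, mul_one c, mul_one (β c)]
    exact mul_le_mul_of_nonneg_right this (abs_nonneg _)
  rw [abs_le] at hA hB ⊢
  constructor <;> linarith [hA.1, hA.2, hB.1, hB.2]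
end

section
/- Let α ∈ (1,2), s ∈ (0,1], and let φ : ℝ → ℝ be twice continuously differentiable with φ, φ′, φ″ bounded. Let β : (0,∞) → ℝ be a bounded continuously differentiable function. Then for every x ∈ ℝ, | ∫_{s^{1/α}}^1 δ_λφ(x) (α β(s^{−1/α} λ) − β′(s^{−1/α} λ) s^{−1/α} λ) λ^{−α−1} dλ | ≤ (1/2) ‖φ″‖_∞ |β(1)| s^{(2−α)/α} + 2 ‖φ′‖_∞ |β(s^{−1/α})| + ‖φ″‖_∞ ∫_0^1 |β(s^{−1/α} λ)| λ^{1−α} dλ, where δ_λφ(x) := φ(x+λ) − φ(x) − φ′(x) λ. -/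
open MeasureTheory Set Filter

/-- Estimate of the middle integral `I₂` in the case `α ∈ (1,2)`. -/
theorem stmt_9 (α s : ℝ) (hα : α ∈ Set.Ioo (1:ℝ) 2) (hs : s ∈ Set.Ioc (0:ℝ) 1)
    (φ : ℝ → ℝ) (hφ : ContDiff ℝ 2 φ)
    (hφb : ∃ M, ∀ x, |φ x| ≤ M) (hφ'b : ∃ M, ∀ x, |deriv φ x| ≤ M)
    (hφ''b : ∃ M, ∀ x, |deriv (deriv φ) x| ≤ M)
    (β β' : ℝ → ℝ)
    (hβd : ∀ y > (0:ℝ), HasDerivAt β (β' y) y)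
    (hβ'c : ContinuousOn β' (Set.Ioi 0))
    (hβb : ∃ M, ∀ y > (0:ℝ), |β y| ≤ M) :
    ∀ x : ℝ,
      |∫ l in Set.Ioc (s ^ (1/α)) (1:ℝ),
          (φ (x + l) - φ x - deriv φ x * l) *
            (α * β (s ^ (-(1/α)) * l) - β' (s ^ (-(1/α)) * l) * s ^ (-(1/α)) * l) *
            l ^ (-α - 1)| ≤
        (1/2) * (⨆ y, |deriv (deriv φ) y|) * |β 1| * s ^ ((2 - α) / α) +
          2 * (⨆ y, |deriv φ y|) * |β (s ^ (-(1/α)))| +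
          (⨆ y, |deriv (deriv φ) y|) *
            ∫ l in Set.Ioc (0:ℝ) 1, |β (s ^ (-(1/α)) * l)| * l ^ (1 - α) := by
  intro x
  obtain ⟨hα1, hα2⟩ := hα
  obtain ⟨hs0, hs1⟩ := hs
  have hα0 : 0 < α := by linarith
  set K := ⨆ y, |deriv (deriv φ) y| with hK
  set L := ⨆ y, |deriv φ y| with hL
  have hKb : ∀ y, |deriv (deriv φ) y| ≤ K := fun y =>
    le_ciSup (f := fun y => |deriv (deriv φ) y|)
      (by obtain ⟨M, hM⟩ := hφ''b; exact ⟨M, by rintro _ ⟨z, rfl⟩; exact hM z⟩) y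
  have hLb : ∀ y, |deriv φ y| ≤ L := fun y =>
    le_ciSup (f := fun y => |deriv φ y|)
      (by obtain ⟨M, hM⟩ := hφ'b; exact ⟨M, by rintro _ ⟨z, rfl⟩; exact hM z⟩) y
  have hK0 : 0 ≤ K := (abs_nonneg _).trans (hKb 0)
  have hc2 : s ^ ((2 - α) / α) = (s ^ (1/α)) ^ (2 - α) := by
    rw [← Real.rpow_mul hs0.le]; congr 1; field_simp
  have hca : s ^ (-(1/α)) * s ^ (1/α) = 1 := by
    rw [← Real.rpow_add hs0]; simp
  have ha0 : 0 < s ^ (1/α) := Real.rpow_pos_of_pos hs0 _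
  have ha1 : s ^ (1/α) ≤ 1 := Real.rpow_le_one hs0.le hs1 (by positivity)
  have hc0 : 0 < s ^ (-(1/α)) := Real.rpow_pos_of_pos hs0 _
  rw [hc2]
  generalize s ^ (1/α) = a at *
  generalize s ^ (-(1/α)) = c at *
  have hφd : Differentiable ℝ φ := hφ.differentiable (by norm_num)
  have hφ1 : ContDiff ℝ 1 (deriv φ) :=
    ((contDiff_succ_iff_deriv (n := 1)).1 (by simpa [one_add_one_eq_two] using hφ)).2.2
  have hφdd : Differentiable ℝ (deriv φ) := hφ1.differentiable (by norm_num)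
  have hφ'c : Continuous (deriv φ) := hφ1.continuous
  have hβc : ContinuousOn β (Ioi 0) := fun y hy => (hβd y hy).continuousAt.continuousWithinAt
  have hd1 : ∀ l, 0 ≤ l → |deriv φ (x + l) - deriv φ x| ≤ K * l := by
    intro l hl
    have := Convex.norm_image_sub_le_of_norm_deriv_le (f := deriv φ) (s := univ) (C := K)
      (fun y _ => hφdd y) (fun y _ => hKb y) convex_univ (mem_univ x) (mem_univ (x + l))
    simpa [abs_of_nonneg hl] using this
  have hδd : ∀ l, HasDerivAt (fun l => φ (x + l) - φ x - deriv φ x * l)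
      (deriv φ (x + l) - deriv φ x) l := by
    intro l
    have h1 : HasDerivAt (fun l => φ (x + l)) (deriv φ (x + l)) l :=
      (hφd (x + l)).hasDerivAt.comp_const_add x l
    have h2 : HasDerivAt (fun l : ℝ => deriv φ x * l) (deriv φ x) l := by
      simpa using (hasDerivAt_id l).const_mul (deriv φ x)
    exact (h1.sub_const (φ x)).sub h2
  have hδ2 : ∀ l, 0 ≤ l → |φ (x + l) - φ x - deriv φ x * l| ≤ 1 / 2 * K * l ^ 2 := by
    intro l hl
    refine image_norm_le_of_norm_deriv_right_le_deriv_boundary (a := 0) (b := l)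
      (f := fun l => φ (x + l) - φ x - deriv φ x * l)
      (f' := fun l => deriv φ (x + l) - deriv φ x)
      (B := fun l => 1 / 2 * K * l ^ 2) (B' := fun l => K * l)
      (fun y _ => (hδd y).continuousAt.continuousWithinAt)
      (fun y _ => (hδd y).hasDerivWithinAt) (by simp) ?_ ?_ ⟨hl, le_rfl⟩
    · intro y
      have := (hasDerivAt_pow 2 y).const_mul (1 / 2 * K)
      refine HasDerivAt.congr_deriv this ?_
      norm_num
      try ring
    · intro y hy
      exact hd1 y hy.1
  have hδ1 : |φ (x + 1) - φ x - deriv φ x * 1| ≤ 2 * L := by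
    have := Convex.norm_image_sub_le_of_norm_deriv_le (f := φ) (s := univ) (C := L)
      (fun y _ => hφd y) (fun y _ => hLb y) convex_univ (mem_univ x) (mem_univ (x + 1))
    have h1 : |φ (x + 1) - φ x| ≤ L := by simpa using this
    have h2 := abs_sub (φ (x + 1) - φ x) (deriv φ x * 1)
    have h3 := hLb x
    rw [mul_one] at *
    linarith
  set G : ℝ → ℝ := fun l => (φ (x + l) - φ x - deriv φ x * l) *
            (α * β (c * l) - β' (c * l) * c * l) * l ^ (-α - 1) with hG
  set H : ℝ → ℝ := fun l => (deriv φ (x + l) - deriv φ x) * β (c * l) * l ^ (-α) with hH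
  set F : ℝ → ℝ := fun l => (φ (x + l) - φ x - deriv φ x * l) * β (c * l) * l ^ (-α) with hF
  have hFd : ∀ l, 0 < l → HasDerivAt F (H l - G l) l := by
    intro l hl
    have h1 : HasDerivAt (fun l => β (c * l)) (β' (c * l) * c) l := by
      have h0 : HasDerivAt (fun l : ℝ => c * l) c l := by
        simpa using (hasDerivAt_id l).const_mul c
      exact (hβd (c * l) (mul_pos hc0 hl)).comp l h0
    have h2 := Real.hasDerivAt_rpow_const (x := l) (p := -α) (Or.inl hl.ne')
    refine HasDerivAt.congr_deriv (((hδd l).mul h1).mul h2) ?_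
    have h3 : l ^ (-α) = l ^ (-α - 1) * l := by
      rw [← Real.rpow_add_one hl.ne']; congr 1; ring
    simp only [hH, hG, h3, Pi.mul_apply]
    ring
  have hsub : Icc a 1 ⊆ Ioi 0 := fun l hl => ha0.trans_le hl.1
  have hmaps : MapsTo (fun l => c * l) (Icc a 1) (Ioi 0) := fun l hl => mul_pos hc0 (hsub hl)
  have cl : ContinuousOn (fun l : ℝ => c * l) (Icc a 1) := by fun_prop
  have cβ : ContinuousOn (fun l => β (c * l)) (Icc a 1) := hβc.comp cl hmaps
  have cβ' : ContinuousOn (fun l => β' (c * l)) (Icc a 1) := hβ'c.comp cl hmaps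
  have cp : ∀ p : ℝ, ContinuousOn (fun l : ℝ => l ^ p) (Icc a 1) := fun p =>
    continuousOn_id.rpow_const (fun l hl => Or.inl (hsub hl).ne')
  have cδ : Continuous (fun l => φ (x + l) - φ x - deriv φ x * l) :=
    continuous_iff_continuousAt.2 fun l => (hδd l).continuousAt
  have cG : ContinuousOn G (Icc a 1) := by
    have := cp (-α - 1)
    have := cδ.continuousOn (s := Icc a 1)
    simp only [hG]
    refine (ContinuousOn.mul ‹_› ?_).mul (cp _)
    exact (continuousOn_const.mul cβ).sub ((cβ'.mul continuousOn_const).mul continuousOn_id)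
  have cH : ContinuousOn H (Icc a 1) := by
    refine (ContinuousOn.mul ?_ cβ).mul (cp _)
    exact (by fun_prop : Continuous fun l => deriv φ (x + l) - deriv φ x).continuousOn
  have iG : IntervalIntegrable G volume a 1 := cG.intervalIntegrable_of_Icc ha1
  have iH : IntervalIntegrable H volume a 1 := cH.intervalIntegrable_of_Icc ha1
  have hFTC : ∫ l in a..1, (H l - G l) = F 1 - F a := by
    refine intervalIntegral.integral_eq_sub_of_hasDerivAt (fun l hl => ?_) (iH.sub iG)
    rw [uIcc_of_le ha1] at hl
    exact hFd l (hsub hl)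
  rw [intervalIntegral.integral_sub iH iG] at hFTC
  rw [← intervalIntegral.integral_of_le ha1]
  have hGe : ∫ l in a..1, G l = F a - F 1 + ∫ l in a..1, H l := by linarith
  have hFa : |F a| ≤ 1 / 2 * K * |β 1| * a ^ (2 - α) := by
    simp only [hF, hca, abs_mul, abs_of_pos (Real.rpow_pos_of_pos ha0 (-α))]
    have h3 : a ^ (2 - α) = a ^ 2 * a ^ (-α) := by
      rw [← Real.rpow_natCast a 2, ← Real.rpow_add ha0]; congr 1
    rw [h3]
    calc _ ≤ (1 / 2 * K * a ^ 2) * |β 1| * a ^ (-α) := by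
          gcongr
          exact hδ2 a ha0.le
      _ = _ := by ring
  have hF1 : |F 1| ≤ 2 * L * |β c| := by
    simp only [hF, Real.one_rpow, mul_one c, abs_mul, abs_one]
    rw [mul_one (_ * _)]
    gcongr
  have iB : IntegrableOn (fun l => |β (c * l)| * l ^ (1 - α)) (Ioc 0 1) := by
    obtain ⟨M, hM⟩ := hβb
    have h1 : IntegrableOn (fun l : ℝ => l ^ (1 - α)) (Ioc 0 1) :=
      (intervalIntegrable_iff_integrableOn_Ioc_of_le zero_le_one).1
        (intervalIntegral.intervalIntegrable_rpow' (by linarith))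
    refine Integrable.bdd_mul (c := M) h1 ?_ ?_
    · refine ContinuousOn.aestronglyMeasurable ?_ measurableSet_Ioc
      exact (hβc.comp (by fun_prop) (fun l hl => mul_pos hc0 hl.1)).abs
    · refine (ae_restrict_iff' measurableSet_Ioc).2 (ae_of_all _ fun l hl => ?_)
      simpa using hM (c * l) (mul_pos hc0 hl.1)
  have hHb : |∫ l in a..1, H l| ≤ K * ∫ l in Ioc (0:ℝ) 1, |β (c * l)| * l ^ (1 - α) := by
    rw [intervalIntegral.integral_of_le ha1, ← integral_const_mul]
    have hss : Ioc a 1 ⊆ Ioc 0 1 := Ioc_subset_Ioc_left ha0.le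
    have iKB := iB.const_mul K
    calc _ ≤ ∫ l in Ioc a 1, K * (|β (c * l)| * l ^ (1 - α)) := by
          rw [← Real.norm_eq_abs]
          refine norm_integral_le_of_norm_le (IntegrableOn.mono_set iKB hss) ?_
          refine (ae_restrict_iff' measurableSet_Ioc).2 (ae_of_all _ fun l hl => ?_)
          have hl0 : 0 < l := ha0.trans hl.1
          have h3 : l ^ (1 - α) = l * l ^ (-α) := by
            rw [sub_eq_add_neg, Real.rpow_add hl0, Real.rpow_one]
          rw [h3, Real.norm_eq_abs]
          simp only [hH, abs_mul, abs_of_pos (Real.rpow_pos_of_pos hl0 (-α))]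
          calc _ ≤ (K * l) * |β (c * l)| * l ^ (-α) := by
                gcongr
                exact hd1 l hl0.le
            _ = _ := by ring
      _ ≤ _ := by
          refine setIntegral_mono_set iKB ?_ hss.eventuallyLE
          refine (ae_restrict_iff' measurableSet_Ioc).2 (ae_of_all _ fun l hl => ?_)
          have := Real.rpow_nonneg hl.1.le (1 - α)
          simp only [Pi.zero_apply]
          positivity
  rw [hGe]
  have t1 := abs_add_le (F a - F 1) (∫ l in a..1, H l)
  have t2 := abs_sub (F a) (F 1)
  linarith
end

section
/- Let α ∈ (0,1), q₀ > (1−α)/α (so that α(1+q₀) > 1), C_β > 0 and s ∈ (0,1]. Let φ : ℝ → ℝ be bounded and continuously differentiable with bounded derivative, and let β : (0,∞) → ℝ be continuously differentiable with |β(y)| ≤ C_β y^{−α q₀} for all y ≥ 1, and assume the function λ ↦ (α β(s^{−1/α} λ) − β′(s^{−1/α} λ) s^{−1/α} λ) λ^{−α−1} (φ(x+λ) − φ(x)) is Lebesgue integrable on (1,∞). Then for every x ∈ ℝ, | ∫_1^∞ (φ(x+λ) − φ(x)) (α β(s^{−1/α} λ) − β′(s^{−1/α} λ) s^{−1/α}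 λ) λ^{−α−1} dλ | ≤ 2 ‖φ‖_∞ |β(s^{−1/α})| + (C_β / (α(1+q₀) − 1)) ‖φ′‖_∞ s^{q₀}. -/
open MeasureTheory Set Filter

/-- Estimate of the tail integral `J₁` in the case `α ∈ (0,1)`, when
`q₀ > (1-α)/α`. -/
theorem stmt_12 (α q₀ Cβ s : ℝ) (hα : α ∈ Set.Ioo (0:ℝ) 1)
    (hq₀ : (1 - α) / α < q₀) (hCβ : 0 < Cβ) (hs : s ∈ Set.Ioc (0:ℝ) 1)
    (φ : ℝ → ℝ) (hφ : ContDiff ℝ 1 φ)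
    (hφb : ∃ M, ∀ x, |φ x| ≤ M) (hφ'b : ∃ M, ∀ x, |deriv φ x| ≤ M)
    (β β' : ℝ → ℝ)
    (hβd : ∀ y > (0:ℝ), HasDerivAt β (β' y) y)
    (hβ'c : ContinuousOn β' (Set.Ioi 0))
    (hβb : ∀ y : ℝ, 1 ≤ y → |β y| ≤ Cβ * y ^ (-(α * q₀)))
    (hint : ∀ x : ℝ, IntegrableOn
      (fun l => (φ (x + l) - φ x) *
        (α * β (s ^ (-(1/α)) * l) - β' (s ^ (-(1/α)) * l) * s ^ (-(1/α)) * l) *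
        l ^ (-α - 1)) (Set.Ioi 1)) :
    ∀ x : ℝ,
      |∫ l in Set.Ioi (1:ℝ),
          (φ (x + l) - φ x) *
            (α * β (s ^ (-(1/α)) * l) - β' (s ^ (-(1/α)) * l) * s ^ (-(1/α)) * l) *
            l ^ (-α - 1)| ≤
        2 * (⨆ y, |φ y|) * |β (s ^ (-(1/α)))| +
          Cβ / (α * (1 + q₀) - 1) * (⨆ y, |deriv φ y|) * s ^ q₀ := by
  obtain ⟨hα0, hα1⟩ := hα
  obtain ⟨hs0, hs1⟩ := hs
  intro x
  have hd : 0 < α * (1 + q₀) - 1 := by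
    rw [div_lt_iff₀ hα0] at hq₀
    nlinarith
  set c : ℝ := s ^ (-(1/α)) with hc
  have hc1 : 1 ≤ c := Real.one_le_rpow_of_pos_of_le_one_of_nonpos hs0 hs1
    (by have : 0 < 1 / α := by positivity
        linarith)
  have hc0 : 0 < c := by linarith
  have hcq : c ^ (-(α * q₀)) = s ^ q₀ := by
    rw [hc, ← Real.rpow_mul hs0.le]
    congr 1
    field_simp
  have hbdφ : BddAbove (range fun y => |φ y|) := by
    obtain ⟨M, hM⟩ := hφb
    exact ⟨M, by rintro _ ⟨y, rfl⟩; exact hM y⟩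
  have hbdφ' : BddAbove (range fun y => |deriv φ y|) := by
    obtain ⟨M, hM⟩ := hφ'b
    exact ⟨M, by rintro _ ⟨y, rfl⟩; exact hM y⟩
  set A : ℝ := ⨆ y, |φ y| with hA
  set B : ℝ := ⨆ y, |deriv φ y| with hB
  have hAb : ∀ y, |φ y| ≤ A := fun y => le_ciSup hbdφ y
  have hBb : ∀ y, |deriv φ y| ≤ B := fun y => le_ciSup hbdφ' y
  have hB0 : 0 ≤ B := (abs_nonneg _).trans (hBb 0)
  have hu : ∀ l, |φ (x + l) - φ x| ≤ 2 * A := fun l => by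
    have h1 := abs_sub (φ (x + l)) (φ x)
    have h2 := hAb (x + l)
    have h3 := hAb x
    linarith
  have hA0 : 0 ≤ 2 * A := (abs_nonneg _).trans (hu 0)
  have hG : ∀ l : ℝ, 1 ≤ l → |β (c * l) * l ^ (-α)| ≤ Cβ * s ^ q₀ * l ^ (-(α * (1 + q₀))) := by
    intro l hl
    have hl0 : 0 < l := by linarith
    have h1 := hβb (c * l) (by nlinarith)
    rw [Real.mul_rpow hc0.le hl0.le, hcq] at h1
    have h2 : l ^ (-(α * (1 + q₀))) = l ^ (-(α * q₀)) * l ^ (-α) := by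
      rw [← Real.rpow_add hl0]; congr 1; ring
    have h3 : 0 < l ^ (-α) := Real.rpow_pos_of_pos hl0 _
    rw [abs_mul, abs_of_pos h3, h2]
    calc _ ≤ (Cβ * (s ^ q₀ * l ^ (-(α * q₀)))) * l ^ (-α) := by gcongr
      _ = _ := by ring
  have hGd : ∀ l : ℝ, 1 ≤ l → HasDerivAt (fun l => β (c * l) * l ^ (-α))
      (-((α * β (c * l) - β' (c * l) * c * l) * l ^ (-α - 1))) l := by
    intro l hl
    have hl0 : 0 < l := by linarith
    have h1 : HasDerivAt (fun l => β (c * l)) (β' (c * l) * c) l := by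
      have h0 : HasDerivAt (fun l : ℝ => c * l) c l := by
        simpa using (hasDerivAt_id l).const_mul c
      exact (hβd (c * l) (by positivity)).comp l h0
    have h2 : HasDerivAt (fun l : ℝ => l ^ (-α)) (-α * l ^ (-α - 1)) l :=
      Real.hasDerivAt_rpow_const (Or.inl hl0.ne')
    refine (h1.mul h2).congr_deriv ?_
    have h3 : l ^ (-α) = l * l ^ (-α - 1) := by
      rw [Real.rpow_sub_one hl0.ne']; field_simp
    rw [h3]; ring
  have hφd : ∀ l : ℝ, HasDerivAt (fun l => φ (x + l) - φ x) (deriv φ (x + l)) l := by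
    intro l
    have h1 := (hφ.differentiable (by norm_num) (x + l)).hasDerivAt
    exact (h1.comp_const_add x l).sub_const _
  have hpow : IntegrableOn (fun l : ℝ => l ^ (-(α * (1 + q₀)))) (Ioi 1) :=
    integrableOn_Ioi_rpow_of_lt (by linarith) one_pos
  have hpowv : ∫ l in Ioi (1:ℝ), l ^ (-(α * (1 + q₀))) = 1 / (α * (1 + q₀) - 1) := by
    rw [integral_Ioi_rpow_of_lt (by linarith) one_pos, Real.one_rpow, ← neg_div_neg_eq]
    congr 1 <;> ring
  have hbd : ∀ l ∈ Ioi (1:ℝ), ‖deriv φ (x + l) * (β (c * l) * l ^ (-α))‖ ≤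
      B * (Cβ * s ^ q₀) * l ^ (-(α * (1 + q₀))) := by
    intro l hl
    rw [Real.norm_eq_abs, abs_mul]
    calc _ ≤ B * (Cβ * s ^ q₀ * l ^ (-(α * (1 + q₀)))) :=
          mul_le_mul (hBb _) (hG l (le_of_lt hl)) (abs_nonneg _) hB0
      _ = _ := by ring
  have hbd' : ∀ᵐ l ∂(volume.restrict (Ioi (1:ℝ))), ‖deriv φ (x + l) * (β (c * l) * l ^ (-α))‖ ≤
      B * (Cβ * s ^ q₀) * l ^ (-(α * (1 + q₀))) :=
    (ae_restrict_iff' measurableSet_Ioi).2 (Eventually.of_forall hbd)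
  have hGi : IntegrableOn (fun l => deriv φ (x + l) * (β (c * l) * l ^ (-α))) (Ioi 1) := by
    refine Integrable.mono' (hpow.const_mul (B * (Cβ * s ^ q₀))) ?_ hbd'
    refine ContinuousOn.aestronglyMeasurable ?_ measurableSet_Ioi
    refine ContinuousOn.mul ?_ fun l hl => (hGd l (le_of_lt hl)).continuousAt.continuousWithinAt
    exact ((hφ.continuous_deriv (by norm_num)).comp (by fun_prop)).continuousOn
  have hlim : Tendsto (fun l => (φ (x + l) - φ x) * (β (c * l) * l ^ (-α))) atTop (nhds 0) := by
    have h0 : Tendsto (fun l : ℝ => 2 * A * (Cβ * s ^ q₀ * l ^ (-(α * (1 + q₀))))) atTop (nhds 0) := by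
      have := (tendsto_rpow_neg_atTop (show 0 < α * (1 + q₀) by linarith)).const_mul (Cβ * s ^ q₀)
      simpa using this.const_mul (2 * A)
    refine squeeze_zero_norm' ?_ h0
    filter_upwards [eventually_ge_atTop 1] with l hl
    rw [Real.norm_eq_abs, abs_mul]
    exact mul_le_mul (hu l) (hG l hl) (abs_nonneg _) hA0
  have hi := hint x
  have key := integral_Ioi_of_hasDerivAt_of_tendsto' (a := (1:ℝ))
    (f := fun l => (φ (x + l) - φ x) * (β (c * l) * l ^ (-α)))
    (f' := fun l => deriv φ (x + l) * (β (c * l) * l ^ (-α)) -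
      (φ (x + l) - φ x) * (α * β (c * l) - β' (c * l) * c * l) * l ^ (-α - 1)) (m := 0)
    (fun l hl => by
      refine ((hφd l).mul (hGd l hl)).congr_deriv ?_
      ring) (hGi.sub hi) hlim
  rw [integral_sub hGi hi] at key
  simp only [mul_one, Real.one_rpow] at key
  have e1 : |(φ (x + 1) - φ x) * β c| ≤ 2 * A * |β c| := by
    rw [abs_mul]
    exact mul_le_mul_of_nonneg_right (hu 1) (abs_nonneg _)
  have e2 := norm_integral_le_of_norm_le (hpow.const_mul (B * (Cβ * s ^ q₀))) hbd'
  rw [integral_const_mul, hpowv, Real.norm_eq_abs] at e2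
  have e3 : Cβ / (α * (1 + q₀) - 1) * B * s ^ q₀ =
      B * (Cβ * s ^ q₀) * (1 / (α * (1 + q₀) - 1)) := by ring
  rw [e3]
  rw [abs_le] at e1 e2 ⊢
  constructor <;> linarith [e1.1, e1.2, e2.1, e2.2]
end

section
/- Let α ∈ (0,1) and s ∈ (0,1]. Let φ : ℝ → ℝ be continuously differentiable with bounded derivative, and let β : (0,∞) → ℝ be continuously differentiable with ∫_0^1 |β(s^{−1/α} λ)| λ^{−α} dλ < ∞. Then for every x ∈ ℝ, | ∫_{s^{1/α}}^1 (φ(x+λ) − φ(x)) (α β(s^{−1/α} λ) − β′(s^{−1/α} λ) s^{−1/α} λ) λ^{−α−1} dλ | ≤ ‖φ′‖_∞ ( |β(1)| s^{(1−α)/α} + |β(s^{−1/α})| + ∫_0^1 |β(s^{−1/α} λ)| λ^{−α} dλ ). -/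
open MeasureTheory Set Filter

theorem abs_sub_le_add (p q : ℝ) : |p - q| ≤ |p| + |q| := by
  simpa using norm_sub_le p q

theorem aux_14 (α a c M : ℝ) (ha : 0 < a) (ha1 : a ≤ 1) (hca : c * a = 1)
    (φ : ℝ → ℝ) (hφ : ContDiff ℝ 1 φ) (hM : ∀ x, |deriv φ x| ≤ M)
    (β β' : ℝ → ℝ)
    (hβd : ∀ y > (0:ℝ), HasDerivAt β (β' y) y)
    (hβ'c : ContinuousOn β' (Set.Ioi 0))
    (hint : IntegrableOn (fun l => |β (c * l)| * l ^ (-α)) (Set.Ioc 0 1)) (x : ℝ) :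
      |∫ l in Set.Ioc a (1:ℝ),
          (φ (x + l) - φ x) * (α * β (c * l) - β' (c * l) * c * l) * l ^ (-α - 1)| ≤
        M * (|β 1| * a ^ (1 - α) + |β c| +
            ∫ l in Set.Ioc (0:ℝ) 1, |β (c * l)| * l ^ (-α)) := by
  have hc : 0 < c := by
    by_contra hc
    nlinarith [mul_nonneg (neg_nonneg.2 (not_lt.1 hc)) ha.le]
  have hM0 : 0 ≤ M := (abs_nonneg _).trans (hM 0)
  have hdφ : Differentiable ℝ φ := hφ.differentiable (by norm_num)
  have hcφ : Continuous (deriv φ) := hφ.continuous_deriv (by norm_num)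
  have hlip : ∀ l, 0 ≤ l → |φ (x + l) - φ x| ≤ M * l := by
    intro l hl
    have := Convex.norm_image_sub_le_of_norm_deriv_le (f := φ) (s := univ) (C := M) (x := x)
      (y := x + l) (fun y _ => hdφ y) (fun y _ => hM y) convex_univ (mem_univ _) (mem_univ _)
    simpa [abs_of_nonneg hl] using this
  have hpos : ∀ l ∈ uIcc a 1, 0 < l := by
    intro l hl
    rw [uIcc_of_le ha1] at hl
    exact ha.trans_le hl.1
  have hu : ∀ l ∈ uIcc a 1, HasDerivAt (fun l => φ (x + l) - φ x) (deriv φ (x + l)) l := by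
    intro l _
    exact ((hdφ (x + l)).hasDerivAt.comp_const_add x l).sub_const _
  have hv : ∀ l ∈ uIcc a 1, HasDerivAt (fun l => -(β (c * l) * l ^ (-α)))
      ((α * β (c * l) - β' (c * l) * c * l) * l ^ (-α - 1)) l := by
    intro l hl
    have hl0 := hpos l hl
    have h1 : HasDerivAt (fun l => β (c * l)) (β' (c * l) * c) l := by
      have h2 : HasDerivAt (fun l : ℝ => c * l) c l := by
        simpa using (hasDerivAt_id l).const_mul c
      exact (hβd (c * l) (by positivity)).comp l h2
    have h3 : HasDerivAt (fun l : ℝ => l ^ (-α)) (-α * l ^ (-α - 1)) l :=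
      Real.hasDerivAt_rpow_const (Or.inl hl0.ne')
    refine (h1.mul h3).neg.congr_deriv ?_
    have : l ^ (-α) = l ^ (-α - 1) * l := by
      rw [← Real.rpow_add_one hl0.ne']; congr 1; ring
    rw [this]; ring
  have hβc : ContinuousOn β (Ioi 0) := fun y hy => (hβd y hy).continuousAt.continuousWithinAt
  have hmaps : MapsTo (fun l => c * l) (uIcc a 1) (Ioi 0) := fun l hl => mul_pos hc (hpos l hl)
  have hcl : ContinuousOn (fun l : ℝ => c * l) (uIcc a 1) := by fun_prop
  have hb1 : ContinuousOn (fun l => β (c * l)) (uIcc a 1) := hβc.comp hcl hmaps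
  have hb2 : ContinuousOn (fun l => β' (c * l)) (uIcc a 1) := hβ'c.comp hcl hmaps
  have hpw : ∀ p : ℝ, ContinuousOn (fun l : ℝ => l ^ p) (uIcc a 1) := fun p =>
    continuousOn_id.rpow_const (fun l hl => Or.inl (hpos l hl).ne')
  have hu' : ContinuousOn (fun l => deriv φ (x + l)) (uIcc a 1) :=
    (hcφ.comp (continuous_const.add continuous_id)).continuousOn
  have hv' : ContinuousOn (fun l => (α * β (c * l) - β' (c * l) * c * l) * l ^ (-α - 1))
      (uIcc a 1) :=
    ((continuousOn_const.mul hb1).sub ((hb2.mul continuousOn_const).mul continuousOn_id)).mul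
      (hpw _)
  have key := intervalIntegral.integral_mul_deriv_eq_deriv_mul hu hv
    hu'.intervalIntegrable hv'.intervalIntegrable
  have e : ∫ l in Set.Ioc a (1:ℝ),
      (φ (x + l) - φ x) * (α * β (c * l) - β' (c * l) * c * l) * l ^ (-α - 1) =
      ∫ l in a..1, (φ (x + l) - φ x) *
        ((α * β (c * l) - β' (c * l) * c * l) * l ^ (-α - 1)) := by
    rw [intervalIntegral.integral_of_le ha1]
    simp only [mul_assoc]
  rw [e, key]
  have hsub : Ioc a 1 ⊆ Ioc (0:ℝ) 1 := Ioc_subset_Ioc_left ha.le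
  have b3 : |∫ l in a..1, deriv φ (x + l) * -(β (c * l) * l ^ (-α))| ≤
      M * ∫ l in Set.Ioc (0:ℝ) 1, |β (c * l)| * l ^ (-α) := by
    rw [intervalIntegral.integral_of_le ha1, ← integral_const_mul]
    calc |∫ l in Ioc a 1, deriv φ (x + l) * -(β (c * l) * l ^ (-α))|
        ≤ ∫ l in Ioc a 1, M * (|β (c * l)| * l ^ (-α)) := by
          rw [← Real.norm_eq_abs]
          refine norm_integral_le_of_norm_le ((hint.mono_set hsub).const_mul M) ?_
          refine (ae_restrict_iff' measurableSet_Ioc).2 (Eventually.of_forall fun l hl => ?_)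
          have hl0 : 0 < l := ha.trans hl.1
          rw [Real.norm_eq_abs, abs_mul, abs_neg, abs_mul,
            abs_of_nonneg (Real.rpow_nonneg hl0.le _)]
          exact mul_le_mul_of_nonneg_right (hM _) (by positivity)
      _ ≤ _ := by
          refine setIntegral_mono_set (hint.const_mul M) ?_ hsub.eventuallyLE
          refine (ae_restrict_iff' measurableSet_Ioc).2 (Eventually.of_forall fun l hl => ?_)
          have hl0 : 0 < l := hl.1
          show 0 ≤ M * (|β (c * l)| * l ^ (-α))
          positivity
  have b1 : |(φ (x + 1) - φ x) * -(β (c * 1) * (1:ℝ) ^ (-α))| ≤ M * |β c| := by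
    rw [mul_one, Real.one_rpow, mul_one, abs_mul, abs_neg]
    have := hlip 1 zero_le_one
    rw [mul_one] at this
    exact mul_le_mul_of_nonneg_right this (abs_nonneg _)
  have b2 : |(φ (x + a) - φ x) * -(β (c * a) * a ^ (-α))| ≤ M * (|β 1| * a ^ (1 - α)) := by
    have h4 : a ^ (1 - α) = a * a ^ (-α) := by
      rw [sub_eq_add_neg, Real.rpow_add ha, Real.rpow_one]
    rw [hca, abs_mul, abs_neg, abs_mul, abs_of_nonneg (Real.rpow_nonneg ha.le (-α)), h4]
    calc _ ≤ (M * a) * (|β 1| * a ^ (-α)) :=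
          mul_le_mul_of_nonneg_right (hlip a ha.le) (by positivity)
      _ = _ := by ring
  refine (abs_sub_le_add _ _).trans ?_
  have := abs_sub_le_add ((φ (x + 1) - φ x) * -(β (c * 1) * (1:ℝ) ^ (-α)))
    ((φ (x + a) - φ x) * -(β (c * a) * a ^ (-α)))
  linarith

/-- Estimate of the middle integral `J₂` in the case `α ∈ (0,1)`. -/
theorem stmt_14 (α s : ℝ) (hα : α ∈ Set.Ioo (0:ℝ) 1) (hs : s ∈ Set.Ioc (0:ℝ) 1)
    (φ : ℝ → ℝ) (hφ : ContDiff ℝ 1 φ)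
    (hφ'b : ∃ M, ∀ x, |deriv φ x| ≤ M)
    (β β' : ℝ → ℝ)
    (hβd : ∀ y > (0:ℝ), HasDerivAt β (β' y) y)
    (hβ'c : ContinuousOn β' (Set.Ioi 0))
    (hint : IntegrableOn (fun l => |β (s ^ (-(1/α)) * l)| * l ^ (-α)) (Set.Ioc 0 1)) :
    ∀ x : ℝ,
      |∫ l in Set.Ioc (s ^ (1/α)) (1:ℝ),
          (φ (x + l) - φ x) *
            (α * β (s ^ (-(1/α)) * l) - β' (s ^ (-(1/α)) * l) * s ^ (-(1/α)) * l) *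
            l ^ (-α - 1)| ≤
        (⨆ y, |deriv φ y|) *
          (|β 1| * s ^ ((1 - α) / α) + |β (s ^ (-(1/α)))| +
            ∫ l in Set.Ioc (0:ℝ) 1, |β (s ^ (-(1/α)) * l)| * l ^ (-α)) := by
  intro x
  have h0 := hs.1
  have e1 : s ^ ((1 - α) / α) = (s ^ (1/α)) ^ (1 - α) := by
    rw [← Real.rpow_mul h0.le]; congr 1; ring
  rw [e1]
  refine aux_14 α _ _ _ (Real.rpow_pos_of_pos h0 _)
    (Real.rpow_le_one h0.le hs.2 (one_div_nonneg.2 hα.1.le)) ?_ φ hφ ?_ β β' hβd hβ'c hint x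
  · rw [← Real.rpow_add h0]; simp
  · obtain ⟨M, hM⟩ := hφ'b
    exact fun y => le_ciSup (f := fun y => |deriv φ y|) ⟨M, by rintro _ ⟨z, rfl⟩; exact hM z⟩ y
end

section
/- Let α ∈ (0,1) and s ∈ (0,1]. Let φ : ℝ → ℝ be continuously differentiable with bounded derivative, and let β : (0,1] → ℝ be continuously differentiable with ∫_0^1 |α β(λ) − β′(λ) λ| λ^{−α} dλ < ∞. Then for every x ∈ ℝ, ∫_0^{s^{1/α}} |φ(x+λ) − φ(x)| · |α β(s^{−1/α} λ) − β′(s^{−1/α} λ) s^{−1/α} λ| λ^{−α−1} dλ ≤ ‖φ′‖_∞ s^{(1−α)/α} ∫_0^1 |α β(λ) − β′(λ) λ| λ^{−α} dλ. -/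
open MeasureTheory Set Filter

/-- Estimate of the singular integral `J₃` near the origin in the case `α ∈ (0,1)`. -/
theorem stmt_15 (α s : ℝ) (hα : α ∈ Set.Ioo (0:ℝ) 1) (hs : s ∈ Set.Ioc (0:ℝ) 1)
    (φ : ℝ → ℝ) (hφ : ContDiff ℝ 1 φ)
    (hφ'b : ∃ M, ∀ x, |deriv φ x| ≤ M)
    (β β' : ℝ → ℝ)
    (hβd : ∀ l ∈ Set.Ioc (0:ℝ) 1, HasDerivAt β (β' l) l)
    (hβ'c : ContinuousOn β' (Set.Ioc 0 1))
    (hint : IntegrableOn (fun l => |α * β l - β' l * l| * l ^ (-α)) (Set.Ioc 0 1)) :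
    ∀ x : ℝ,
      (∫ l in Set.Ioc (0:ℝ) (s ^ (1/α)),
          |φ (x + l) - φ x| *
            |α * β (s ^ (-(1/α)) * l) - β' (s ^ (-(1/α)) * l) * s ^ (-(1/α)) * l| *
            l ^ (-α - 1)) ≤
        (⨆ y, |deriv φ y|) * s ^ ((1 - α) / α) *
          ∫ l in Set.Ioc (0:ℝ) 1, |α * β l - β' l * l| * l ^ (-α) := by
  intro x
  obtain ⟨hα0, hα1⟩ := hα
  obtain ⟨hs0, hs1⟩ := hs
  have hbdd : BddAbove (Set.range fun y => |deriv φ y|) := by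
    obtain ⟨M, hM⟩ := hφ'b
    exact ⟨M, by rintro _ ⟨y, rfl⟩; exact hM y⟩
  set M : ℝ := ⨆ y, |deriv φ y| with hMdef
  have hM : ∀ y, |deriv φ y| ≤ M := fun y => le_ciSup hbdd y
  have hlip : ∀ l : ℝ, 0 < l → |φ (x + l) - φ x| ≤ M * l := by
    intro l hl
    have h := Convex.norm_image_sub_le_of_norm_deriv_le (f := φ) (C := M) (s := Set.univ)
      (fun y _ => (hφ.differentiable (by norm_num)).differentiableAt)
      (fun y _ => by rw [Real.norm_eq_abs]; exact hM y) convex_univ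
      (Set.mem_univ x) (Set.mem_univ (x + l))
    simpa [Real.norm_eq_abs, abs_of_pos hl] using h
  set c : ℝ := s ^ (-(1/α)) with hc
  set T : ℝ := s ^ (1/α) with hT
  have hc0 : 0 < c := Real.rpow_pos_of_pos hs0 _
  have hT0 : 0 < T := Real.rpow_pos_of_pos hs0 _
  have hcT : c * T = 1 := by
    rw [hc, hT, ← Real.rpow_add hs0]; simp
  have hTc : c⁻¹ = T := by
    rw [inv_eq_iff_eq_inv]; exact eq_inv_of_mul_eq_one_left hcT
  have hcα : c ^ α * c⁻¹ = s ^ ((1 - α) / α) := by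
    rw [hTc, hc, hT, ← Real.rpow_mul hs0.le, ← Real.rpow_add hs0]
    congr 1
    field_simp
    ring
  set g : ℝ → ℝ := fun l => |α * β l - β' l * l| * l ^ (-α) with hg
  have hgi : IntervalIntegrable g volume 0 1 :=
    (intervalIntegrable_iff_integrableOn_Ioc_of_le zero_le_one).2 hint
  have hgc : IntegrableOn (fun l => g (c * l)) (Set.Ioc 0 T) := by
    rw [← intervalIntegrable_iff_integrableOn_Ioc_of_le hT0.le]
    have h := hgi.comp_mul_left (c := c)
    simpa [hTc] using h
  have hcv : ∫ l in Set.Ioc (0:ℝ) T, g (c * l) = c⁻¹ * ∫ l in Set.Ioc (0:ℝ) 1, g l := by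
    rw [← intervalIntegral.integral_of_le hT0.le, ← intervalIntegral.integral_of_le zero_le_one,
      intervalIntegral.integral_comp_mul_left _ hc0.ne', hcT, mul_zero, smul_eq_mul]
  calc _ ≤ ∫ l in Set.Ioc (0:ℝ) T, (M * c ^ α) * g (c * l) := by
        apply integral_mono_of_nonneg
        · refine (ae_restrict_iff' measurableSet_Ioc).2 (Eventually.of_forall fun l hl => ?_)
          have := hl.1
          simp only [Pi.zero_apply]
          positivity
        · exact hgc.const_mul _
        · refine (ae_restrict_iff' measurableSet_Ioc).2 (Eventually.of_forall fun l hl => ?_)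
          have hl0 := hl.1
          have e1 : c ^ α * (c * l) ^ (-α) = l * l ^ (-α - 1) := by
            rw [Real.mul_rpow hc0.le hl0.le, ← mul_assoc, ← Real.rpow_add hc0,
              Real.rpow_sub_one hl0.ne']
            simp
            field_simp
          have e2 : M * c ^ α * g (c * l) = (M * l) *
              |α * β (c * l) - β' (c * l) * c * l| * l ^ (-α - 1) := by
            simp only [hg]
            rw [← mul_assoc (β' (c * l))]
            linear_combination M * |α * β (c * l) - β' (c * l) * c * l| * e1
          simp only
          rw [e2]
          have := hlip l hl0
          gcongr
    _ = _ := by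
        rw [integral_const_mul, hcv, ← hcα]
        ring
end

section
/- Let s ∈ (0,1]. Let φ : ℝ → ℝ be twice continuously differentiable with φ′ and φ″ bounded, and let β : (0,∞) → ℝ be continuously differentiable with ∫_0^1 |β(s^{−1} λ)| dλ < ∞. Then for every x ∈ ℝ, | ∫_s^1 (φ(x+λ) − φ(x) − φ′(x) λ) (β(s^{−1} λ) − β′(s^{−1} λ) s^{−1} λ) λ^{−2} dλ | ≤ ‖φ″‖_∞ ( |β(1)| s + |β(s^{−1})| ) + ‖φ″‖_∞ ∫_0^1 |β(s^{−1} λ)| dλ. -/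
open MeasureTheory Set Filter

/-- Estimate of the middle integral `T₂` in the case `α = 1`. -/
theorem stmt_17 (s : ℝ) (hs : s ∈ Set.Ioc (0:ℝ) 1)
    (φ : ℝ → ℝ) (hφ : ContDiff ℝ 2 φ)
    (hφ'b : ∃ M, ∀ x, |deriv φ x| ≤ M)
    (hφ''b : ∃ M, ∀ x, |deriv (deriv φ) x| ≤ M)
    (β β' : ℝ → ℝ)
    (hβd : ∀ y > (0:ℝ), HasDerivAt β (β' y) y)
    (hβ'c : ContinuousOn β' (Set.Ioi 0))
    (hint : IntegrableOn (fun l => |β (s⁻¹ * l)|) (Set.Ioc 0 1)) :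
    ∀ x : ℝ,
      |∫ l in Set.Ioc s (1:ℝ),
          (φ (x + l) - φ x - deriv φ x * l) *
            (β (s⁻¹ * l) - β' (s⁻¹ * l) * s⁻¹ * l) * (l ^ 2)⁻¹| ≤
        (⨆ y, |deriv (deriv φ) y|) * (|β 1| * s + |β s⁻¹|) +
          (⨆ y, |deriv (deriv φ) y|) * ∫ l in Set.Ioc (0:ℝ) 1, |β (s⁻¹ * l)| := by
  intro x
  obtain ⟨hs0, hs1⟩ := hs
  obtain ⟨M0, hM0⟩ := hφ''b
  set M : ℝ := ⨆ y, |deriv (deriv φ) y| with hMdef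
  have hM : ∀ y, |deriv (deriv φ) y| ≤ M := fun y =>
    le_ciSup (f := fun y => |deriv (deriv φ) y|) ⟨M0, by rintro _ ⟨z, rfl⟩; exact hM0 z⟩ y
  have hMnn : 0 ≤ M := (abs_nonneg _).trans (hM 0)
  have hd1 : Differentiable ℝ φ := hφ.differentiable (by norm_num)
  have hφ1 : ContDiff ℝ 1 (deriv φ) := by
    have h2 : ContDiff ℝ (1 + 1) φ := by
      have : (1 + 1 : WithTop ℕ∞) = 2 := by norm_num
      rw [this]; exact hφ
    exact (contDiff_succ_iff_deriv.mp h2).2.2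
  have hd2 : Differentiable ℝ (deriv φ) := hφ1.differentiable (by norm_num)
  have hc1 : Continuous (deriv φ) := hφ1.continuous
  have hlip : ∀ l, 0 ≤ l → |deriv φ (x + l) - deriv φ x| ≤ M * l := by
    intro l hl
    have := Convex.norm_image_sub_le_of_norm_deriv_le (f := deriv φ) (C := M) (s := Set.univ)
      (x := x) (y := x + l) (fun z _ => hd2 z) (fun z _ => hM z) convex_univ trivial trivial
    simpa [Real.norm_eq_abs, abs_of_nonneg hl] using this
  have hgd : ∀ l, HasDerivAt (fun l => φ (x + l) - φ x - deriv φ x * l)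
      (deriv φ (x + l) - deriv φ x) l := by
    intro l
    have h1 : HasDerivAt (fun l => φ (x + l)) (deriv φ (x + l)) l :=
      HasDerivAt.comp_const_add x l (hd1 (x + l)).hasDerivAt
    have h2 : HasDerivAt (fun l => deriv φ x * l) (deriv φ x) l := by
      simpa using (hasDerivAt_id l).const_mul (deriv φ x)
    exact (h1.sub_const _).sub h2
  have hgb : ∀ l, 0 ≤ l → |φ (x + l) - φ x - deriv φ x * l| ≤ M * l * l := by
    intro l hl
    have := Convex.norm_image_sub_le_of_norm_hasDerivWithin_le
      (f := fun l => φ (x + l) - φ x - deriv φ x * l) (C := M * l) (s := Set.Icc 0 l)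
      (f' := fun l => deriv φ (x + l) - deriv φ x)
      (x := 0) (y := l) (fun z _ => (hgd z).hasDerivWithinAt)
      (fun z hz => (hlip z hz.1).trans (mul_le_mul_of_nonneg_left hz.2 hMnn))
      (convex_Icc 0 l) (by simp [hl]) (by simp [hl])
    simpa [Real.norm_eq_abs, abs_of_nonneg hl] using this
  have hpos : ∀ l ∈ Set.uIcc s 1, 0 < l := by
    intro l hl
    rw [Set.uIcc_of_le hs1] at hl
    exact hs0.trans_le hl.1
  have hpos' : ∀ l ∈ Set.uIcc s 1, 0 < s⁻¹ * l := fun l hl =>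
    mul_pos (inv_pos.2 hs0) (hpos l hl)
  have hBd : ∀ l ∈ Set.uIcc s 1, HasDerivAt (fun l => β (s⁻¹ * l)) (β' (s⁻¹ * l) * s⁻¹) l := by
    intro l hl
    have h2 : HasDerivAt (fun l => s⁻¹ * l) s⁻¹ l := by
      simpa using (hasDerivAt_id l).const_mul s⁻¹
    exact HasDerivAt.comp l (hβd _ (hpos' l hl)) h2
  have hFd : ∀ l ∈ Set.uIcc s 1, HasDerivAt (fun l => β (s⁻¹ * l) / l)
      (-((β (s⁻¹ * l) - β' (s⁻¹ * l) * s⁻¹ * l) * (l ^ 2)⁻¹)) l := by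
    intro l hl
    have := (hBd l hl).div (hasDerivAt_id l) (hpos l hl).ne'
    refine HasDerivAt.congr_deriv this ?_
    simp only [id]
    ring
  have hBc : ContinuousOn (fun l => β (s⁻¹ * l)) (Set.uIcc s 1) :=
    fun l hl => (hBd l hl).continuousAt.continuousWithinAt
  have hB'c : ContinuousOn (fun l => β' (s⁻¹ * l)) (Set.uIcc s 1) :=
    hβ'c.comp (by fun_prop) hpos'
  have hinv : ContinuousOn (fun l : ℝ => (l ^ 2)⁻¹) (Set.uIcc s 1) :=
    ContinuousOn.inv₀ (by fun_prop) (fun l hl => (pow_pos (hpos l hl) 2).ne')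
  have hF'c : ContinuousOn (fun l => -((β (s⁻¹ * l) - β' (s⁻¹ * l) * s⁻¹ * l) * (l ^ 2)⁻¹))
      (Set.uIcc s 1) :=
    ((hBc.sub ((hB'c.mul continuousOn_const).mul continuousOn_id)).mul hinv).neg
  have hFc : ContinuousOn (fun l => β (s⁻¹ * l) / l) (Set.uIcc s 1) :=
    fun l hl => (hFd l hl).continuousAt.continuousWithinAt
  have hg'c : Continuous (fun l => deriv φ (x + l) - deriv φ x) := by fun_prop
  have key := intervalIntegral.integral_mul_deriv_eq_deriv_mul (a := s) (b := 1)
    (fun l _ => hgd l) hFd (hg'c.intervalIntegrable _ _) hF'c.intervalIntegrable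
  have heq : ∫ l in Set.Ioc s (1:ℝ), (φ (x + l) - φ x - deriv φ x * l) *
            (β (s⁻¹ * l) - β' (s⁻¹ * l) * s⁻¹ * l) * (l ^ 2)⁻¹ =
      - ∫ l in s..1, (φ (x + l) - φ x - deriv φ x * l) *
        -((β (s⁻¹ * l) - β' (s⁻¹ * l) * s⁻¹ * l) * (l ^ 2)⁻¹) := by
    rw [← intervalIntegral.integral_neg, intervalIntegral.integral_of_le hs1]
    congr 1
    funext l
    ring
  rw [heq, key]
  have hI : |∫ l in s..1, (deriv φ (x + l) - deriv φ x) * (β (s⁻¹ * l) / l)| ≤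
      M * ∫ l in Set.Ioc (0:ℝ) 1, |β (s⁻¹ * l)| := by
    have h1 : |∫ l in s..1, (deriv φ (x + l) - deriv φ x) * (β (s⁻¹ * l) / l)| ≤
        ∫ l in s..1, M * |β (s⁻¹ * l)| := by
      rw [← Real.norm_eq_abs]
      refine intervalIntegral.norm_integral_le_of_norm_le hs1 ?_ ?_
      · refine Filter.Eventually.of_forall fun l hl => ?_
        have hl0 : 0 < l := hs0.trans hl.1
        rw [Real.norm_eq_abs, abs_mul, abs_div, abs_of_pos hl0]
        calc _ ≤ (M * l) * (|β (s⁻¹ * l)| / l) := by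
              gcongr
              exact hlip l hl0.le
          _ = _ := by field_simp
      · exact (hBc.abs.const_mul M).intervalIntegrable
    refine h1.trans ?_
    rw [intervalIntegral.integral_const_mul, intervalIntegral.integral_of_le hs1]
    refine mul_le_mul_of_nonneg_left ?_ hMnn
    exact setIntegral_mono_set hint (Filter.Eventually.of_forall fun l => abs_nonneg _)
      (Set.Ioc_subset_Ioc_left hs0.le).eventuallyLE
  have hb1 : |(φ (x + 1) - φ x - deriv φ x * 1) * (β (s⁻¹ * 1) / 1)| ≤ M * |β s⁻¹| := by
    rw [abs_mul]
    have := hgb 1 zero_le_one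
    rw [mul_one s⁻¹, div_one]
    gcongr
    linarith
  have hbs : |(φ (x + s) - φ x - deriv φ x * s) * (β (s⁻¹ * s) / s)| ≤ M * (|β 1| * s) := by
    rw [abs_mul, inv_mul_cancel₀ hs0.ne', abs_div, abs_of_pos hs0]
    calc _ ≤ (M * s * s) * (|β 1| / s) := by
          gcongr
          exact hgb s hs0.le
      _ = _ := by field_simp
  rw [abs_le] at *
  constructor <;> linarith [hI.1, hI.2, hb1.1, hb1.2, hbs.1, hbs.2]
end
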